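/- Let f : 𝔤 → 𝔥 be a quasi-isomorphism of differential graded Lie algebras over a field k of characteristic zero. Then the induced map of universal enveloping algebras U(𝔤) → U(𝔥) is a quasi-isomorphism of differential graded associative algebras. In particular, for any dgla 𝔤, the map k = U(0) → U(Cn(𝔤)) is a quasi-isomorphism. -/

import Mathlib

open TensorProduct

universe u

/-- Transport along an equality of degrees. -/
def gcast {C : ℤ → Type u} {i j : ℤ} (h : i = j) (x : C i) : C j := h ▸ x

/-- Transport along an equality of degrees, as a linear map. -/
def lgcast {K : Type u} [Field K] {C : ℤ → Type u} [∀ i, AddCommGroup (C i)]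
    [∀ i, Module K (C i)] {i j : ℤ} (h : i = j) : C i →ₗ[K] C j :=
  h ▸ LinearMap.id

/-- A differential graded Lie algebra over `K`, given by its graded pieces. -/
class DGLA (K : Type u) [Field K] (A : ℤ → Type u)
    [∀ i, AddCommGroup (A i)] [∀ i, Module K (A i)] where
  d : ∀ i, A i →ₗ[K] A (i + 1)
  bk : ∀ i j, A i →ₗ[K] A j →ₗ[K] A (i + j)
  d_sq : ∀ i (x : A i), d (i + 1) (d i x) = 0
  antisymm : ∀ i j (x : A i) (y : A j),
    bk j i y x = gcast (add_comm i j) (-(((-1 : K) ^ (i * j)) • bk i j x y))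
  jacobi : ∀ p q r (x : A p) (y : A q) (z : A r),
    bk p (q + r) x (bk q r y z)
      = gcast (show p + q + r = p + (q + r) by ring) (bk (p + q) r (bk p q x y) z)
        + ((-1 : K) ^ (p * q)) •
          gcast (show q + (p + r) = p + (q + r) by ring) (bk q (p + r) y (bk p r x z))
  leibniz : ∀ i j (x : A i) (y : A j),
    d (i + j) (bk i j x y)
      = gcast (show i + 1 + j = i + j + 1 by ring) (bk (i + 1) j (d i x) y)
        + ((-1 : K) ^ i) •
          gcast (show i + (j + 1) = i + j + 1 by ring) (bk i (j + 1) x (d j y))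

/-- A representation of a differential graded Lie algebra, following Budur–Wang's sign
convention `[x,y]v = x(yv) + (-1)^{pq} y(xv)`. -/
class DGLARep (K : Type u) [Field K] (A : ℤ → Type u)
    [∀ i, AddCommGroup (A i)] [∀ i, Module K (A i)] [DGLA K A]
    (V : ℤ → Type u) [∀ i, AddCommGroup (V i)] [∀ i, Module K (V i)] where
  dV : ∀ i, V i →ₗ[K] V (i + 1)
  ρ : ∀ p j, A p →ₗ[K] V j →ₗ[K] V (p + j)
  dV_sq : ∀ i (v : V i), dV (i + 1) (dV i v) = 0
  leibniz : ∀ p j (x : A p) (v : V j),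
    dV (p + j) (ρ p j x v)
      = gcast (show p + 1 + j = p + j + 1 by ring) (ρ (p + 1) j (DGLA.d (K := K) (A := A) p x) v)
        + ((-1 : K) ^ p) •
          gcast (show p + (j + 1) = p + j + 1 by ring) (ρ p (j + 1) x (dV j v))
  compat : ∀ p q j (x : A p) (y : A q) (v : V j),
    ρ (p + q) j (DGLA.bk (K := K) (A := A) p q x y) v
      = gcast (show p + (q + j) = p + q + j by ring) (ρ p (q + j) x (ρ q j y v))
        + ((-1 : K) ^ (p * q)) •
          gcast (show q + (p + j) = p + q + j by ring) (ρ q (p + j) y (ρ p j x v))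
section DGAlg

/-- A differential graded (unital, associative) algebra over `K`, given by its graded pieces. -/
class DGAlg (K : Type u) [Field K] (B : ℤ → Type u)
    [∀ i, AddCommGroup (B i)] [∀ i, Module K (B i)] where
  mul : ∀ i j, B i →ₗ[K] B j →ₗ[K] B (i + j)
  one : B 0
  d : ∀ i, B i →ₗ[K] B (i + 1)
  d_sq : ∀ i (x : B i), d (i + 1) (d i x) = 0
  mul_assoc : ∀ p q r (x : B p) (y : B q) (z : B r),
    mul (p + q) r (mul p q x y) z
      = gcast (show p + (q + r) = p + q + r by ring) (mul p (q + r) x (mul q r y z))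
  one_mul : ∀ i (x : B i), mul 0 i one x = gcast (show i = 0 + i by ring) x
  mul_one : ∀ i (x : B i), mul i 0 x one = gcast (show i = i + 0 by ring) x
  leibniz : ∀ i j (x : B i) (y : B j),
    d (i + j) (mul i j x y)
      = gcast (show i + 1 + j = i + j + 1 by ring) (mul (i + 1) j (d i x) y)
        + ((-1 : K) ^ i) •
          gcast (show i + (j + 1) = i + j + 1 by ring) (mul i (j + 1) x (d j y))
  d_one : d 0 one = 0

variable (K : Type u) [Field K]

/-- A morphism of differential graded algebras. -/
structure DGAlgHom (B C : ℤ → Type u)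
    [∀ i, AddCommGroup (B i)] [∀ i, Module K (B i)] [DGAlg K B]
    [∀ i, AddCommGroup (C i)] [∀ i, Module K (C i)] [DGAlg K C] where
  f : ∀ i, B i →ₗ[K] C i
  map_d : ∀ i (x : B i), f (i + 1) (DGAlg.d (K := K) (B := B) i x)
    = DGAlg.d (K := K) (B := C) i (f i x)
  map_mul : ∀ i j (x : B i) (y : B j),
    f (i + j) (DGAlg.mul (K := K) (B := B) i j x y)
      = DGAlg.mul (K := K) (B := C) i j (f i x) (f j y)
  map_one : f 0 (DGAlg.one (K := K) (B := B)) = DGAlg.one (K := K) (B := C)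

/-- A morphism of differential graded Lie algebras. -/
structure DGLAHom (A A' : ℤ → Type u)
    [∀ i, AddCommGroup (A i)] [∀ i, Module K (A i)] [DGLA K A]
    [∀ i, AddCommGroup (A' i)] [∀ i, Module K (A' i)] [DGLA K A'] where
  f : ∀ i, A i →ₗ[K] A' i
  map_d : ∀ i (x : A i), f (i + 1) (DGLA.d (K := K) (A := A) i x)
    = DGLA.d (K := K) (A := A') i (f i x)
  map_bk : ∀ i j (x : A i) (y : A j),
    f (i + j) (DGLA.bk (K := K) (A := A) i j x y)
      = DGLA.bk (K := K) (A := A') i j (f i x) (f j y)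

/-- A map from a dgla to a dg algebra sending the bracket to the graded commutator:
`φ([x,y]) = φ(x)φ(y) - (-1)^{ij} φ(y)φ(x)`. -/
structure LieToAlgMap (A : ℤ → Type u)
    [∀ i, AddCommGroup (A i)] [∀ i, Module K (A i)] [DGLA K A]
    (B : ℤ → Type u) [∀ i, AddCommGroup (B i)] [∀ i, Module K (B i)] [DGAlg K B] where
  f : ∀ i, A i →ₗ[K] B i
  map_d : ∀ i (x : A i), f (i + 1) (DGLA.d (K := K) (A := A) i x)
    = DGAlg.d (K := K) (B := B) i (f i x)
  map_bk : ∀ i j (x : A i) (y : A j),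
    f (i + j) (DGLA.bk (K := K) (A := A) i j x y)
      = DGAlg.mul (K := K) (B := B) i j (f i x) (f j y)
        - ((-1 : K) ^ (i * j)) •
          gcast (C := B) (show j + i = i + j by ring)
            (DGAlg.mul (K := K) (B := B) j i (f j y) (f i x))

/-- `(U, ι)` is a universal enveloping algebra of the dgla `A`: every map from `A` to a dg
algebra sending brackets to graded commutators factors uniquely through `ι`. -/
structure IsEnvelope (A : ℤ → Type u)
    [∀ i, AddCommGroup (A i)] [∀ i, Module K (A i)] [DGLA K A]
    (U : ℤ → Type u) [∀ i, AddCommGroup (U i)] [∀ i, Module K (U i)] [DGAlg K U]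
    (ι : LieToAlgMap K A U) : Prop where
  universal : ∀ (B : ℤ → Type u) (_ : ∀ i, AddCommGroup (B i)) (_ : ∀ i, Module K (B i))
    (_ : DGAlg K B) (φ : LieToAlgMap K A B),
    ∃! Φ : DGAlgHom K U B, ∀ i (x : A i), Φ.f i (ι.f i x) = φ.f i x

/-- A family of linear maps between graded complexes is a quasi-isomorphism if it induces a
bijection on all cohomology groups. -/
def IsQIsoMap {C D : ℤ → Type u}
    [∀ i, AddCommGroup (C i)] [∀ i, Module K (C i)]
    [∀ i, AddCommGroup (D i)] [∀ i, Module K (D i)]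
    (dC : ∀ i, C i →ₗ[K] C (i + 1)) (dD : ∀ i, D i →ₗ[K] D (i + 1))
    (f : ∀ i, C i →ₗ[K] D i) : Prop :=
  (∀ (i : ℤ) (y : D i), dD i y = 0 →
    ∃ (x : C i) (z : D (i - 1)), dC i x = 0 ∧
      f i x = y + gcast (C := D) (show i - 1 + 1 = i by omega) (dD (i - 1) z)) ∧
  (∀ (i : ℤ) (x : C i), dC i x = 0 →
    (∃ z : D (i - 1), f i x = gcast (C := D) (show i - 1 + 1 = i by omega) (dD (i - 1) z)) →
    ∃ w : C (i - 1), x = gcast (C := C) (show i - 1 + 1 = i by omega) (dC (i - 1) w))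

end DGAlg

/-!
The swaps `sᵢ` and brackets `bᵢ` of adjacent tensor factors combine into affine involutions
`(w, m) ↦ (sᵢ w, m + φ (bᵢ w))` recording the relation `xy = ± yx + [x, y]`. By antisymmetry and
the Jacobi identity they satisfy the Coxeter relations of the symmetric group, so in characteristic
zero one can average over it. Choosing `φ` by recursion on the length of tensors, the average is a
projection of `T(𝔤)` that factors through `U(𝔤)`; this is the Poincaré–Birkhoff–Witt theorem. The
projection commutes with the differential and is natural in `𝔤`, so the complex `U(𝔤)` is naturally
a retract of `T(𝔤)`.

Over a field a quasi-isomorphism is a homotopy equivalence, and so are its tensor powers. Hence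
`T(f)` is a quasi-isomorphism, and so is its retract `U(f)`. If `𝔤` is acyclic, a contraction of
`𝔤` acting on the first tensor factor contracts `T(𝔤)` onto `k`.
-/

/-! ### Homotopies -/

/-- A super complex: the `ℤ/2`-graded object underlying a cochain complex, which is all that the
Koszul sign rule sees. For the total space of a complex, `parity` acts by `(-1) ^ i` in degree
`i`. -/
structure SuperComplex (K V : Type*) [CommRing K] [AddCommGroup V] [Module K V] where
  parity : Module.End K V
  d : Module.End K V
  parity_parity : ∀ x, parity (parity x) = x
  d_d : ∀ x, d (d x) = 0
  parity_d : ∀ x, parity (d x) = -d (parity x)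

namespace SuperComplex

open DirectSum

section CommRing

variable {K V W V₂ W₂ : Type*} [CommRing K] [AddCommGroup V] [Module K V]
  [AddCommGroup W] [Module K W] [AddCommGroup V₂] [Module K V₂] [AddCommGroup W₂] [Module K W₂]

/-- Even chain maps between super complexes. -/
structure IsHom (X : SuperComplex K V) (Y : SuperComplex K W) (f : V →ₗ[K] W) : Prop where
  map_d : ∀ x, f (X.d x) = Y.d (f x)
  map_parity : ∀ x, f (X.parity x) = Y.parity (f x)

theorem IsHom.comp {X : SuperComplex K V} {Y : SuperComplex K W} {Z : SuperComplex K V₂}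
    {g : W →ₗ[K] V₂} {f : V →ₗ[K] W} (hg : IsHom Y Z g) (hf : IsHom X Y f) :
    IsHom X Z (g ∘ₗ f) where
  map_d x := by simp only [LinearMap.comp_apply, hf.map_d, hg.map_d]
  map_parity x := by simp only [LinearMap.comp_apply, hf.map_parity, hg.map_parity]

/-- Odd operators, those which anticommute with the parity. -/
def IsOdd (X : SuperComplex K V) (k : Module.End K V) : Prop :=
  ∀ x, k (X.parity x) = -X.parity (k x)

/-- Vanishing of the cohomology. -/
def IsAcyclic (X : SuperComplex K V) : Prop :=
  ∀ x, X.d x = 0 → ∃ y, X.d y = x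

/-- Contracting homotopies, required to be odd. -/
structure IsContraction (X : SuperComplex K V) (k : Module.End K V) : Prop where
  odd : X.IsOdd k
  d_add : ∀ x, X.d (k x) + k (X.d x) = x

/-- Bijectivity of the map induced on cohomology. -/
structure IsQuasiIso (X : SuperComplex K V) (Y : SuperComplex K W) (f : V →ₗ[K] W) : Prop where
  surjective : ∀ y, Y.d y = 0 → ∃ x z, X.d x = 0 ∧ f x = y + Y.d z
  injective : ∀ x, X.d x = 0 → (∃ z, f x = Y.d z) → ∃ w, x = X.d w

/-- Chain homotopy of an endomorphism to the identity, through an odd homotopy. -/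
def HomotopicToId (X : SuperComplex K V) (a : Module.End K V) : Prop :=
  ∃ k, X.IsOdd k ∧ ∀ x, a x = x + X.d (k x) + k (X.d x)

/-- Chain homotopy equivalences of super complexes. -/
def IsHomotopyEquiv (X : SuperComplex K V) (Y : SuperComplex K W) (f : V →ₗ[K] W) : Prop :=
  IsHom X Y f ∧ ∃ g, IsHom Y X g ∧ X.HomotopicToId (g ∘ₗ f) ∧ Y.HomotopicToId (f ∘ₗ g)

theorem HomotopicToId.id (X : SuperComplex K V) : X.HomotopicToId LinearMap.id :=
  ⟨0, fun _ => by simp, fun _ => by simp⟩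

theorem IsHomotopyEquiv.refl (X : SuperComplex K V) : IsHomotopyEquiv X X LinearMap.id :=
  ⟨⟨fun _ => rfl, fun _ => rfl⟩, LinearMap.id, ⟨fun _ => rfl, fun _ => rfl⟩,
    HomotopicToId.id X, HomotopicToId.id X⟩

theorem IsHomotopyEquiv.isQuasiIso {X : SuperComplex K V} {Y : SuperComplex K W}
    {f : V →ₗ[K] W} (h : IsHomotopyEquiv X Y f) : IsQuasiIso X Y f := by
  obtain ⟨-, g, hg, ⟨k, -, hk⟩, ⟨l, -, hl⟩⟩ := h
  refine ⟨fun y hy => ⟨g y, l y, ?_, ?_⟩, fun x hx ⟨z, hz⟩ => ⟨g z - k x, ?_⟩⟩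
  · rw [← hg.map_d, hy, map_zero]
  · simpa [hy] using hl y
  · have hgf : X.d (g z) = x + X.d (k x) := by
      simpa [hx, hz, hg.map_d] using hk x
    rw [map_sub, hgf, add_sub_cancel_right]

theorem IsQuasiIso.of_retract {X : SuperComplex K V} {Y : SuperComplex K W}
    {X₂ : SuperComplex K V₂} {Y₂ : SuperComplex K W₂} {f : V →ₗ[K] W} {f₂ : V₂ →ₗ[K] W₂}
    {s : V₂ →ₗ[K] V} {p : V →ₗ[K] V₂} {s' : W₂ →ₗ[K] W} {p' : W →ₗ[K] W₂}
    (hf : IsQuasiIso X Y f)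
    (hs : ∀ x, s (X₂.d x) = X.d (s x)) (hp : ∀ x, p (X.d x) = X₂.d (p x))
    (hs' : ∀ y, s' (Y₂.d y) = Y.d (s' y)) (hp' : ∀ y, p' (Y.d y) = Y₂.d (p' y))
    (hps : ∀ x, p (s x) = x) (hps' : ∀ y, p' (s' y) = y)
    (hfs : ∀ x, f (s x) = s' (f₂ x)) (hfp : ∀ x, f₂ (p x) = p' (f x)) :
    IsQuasiIso X₂ Y₂ f₂ := by
  refine ⟨fun y hy => ?_, fun x hx ⟨z, hz⟩ => ?_⟩
  · obtain ⟨x, z, hx, hxz⟩ := hf.surjective (s' y) (by rw [← hs', hy, map_zero])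
    exact ⟨p x, p' z, by rw [← hp, hx, map_zero], by rw [hfp, hxz, map_add, hps', hp']⟩
  · obtain ⟨w, hw⟩ := hf.injective (s x) (by rw [← hs, hx, map_zero]) ⟨s' z, by rw [hfs, hz, hs']⟩
    exact ⟨p w, by rw [← hp, ← hw, hps]⟩

/-- The mapping cone of an even chain map; the source is shifted, hence the signs. -/
def cone {X : SuperComplex K V} {Y : SuperComplex K W} {f : V →ₗ[K] W} (hf : IsHom X Y f) :
    SuperComplex K (V × W) where
  parity := (-X.parity).prodMap Y.parity
  d := (-X.d ∘ₗ LinearMap.fst K V W).prod (f.coprod Y.d)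
  parity_parity x := by simp [X.parity_parity, Y.parity_parity]
  d_d x := by simp [X.d_d, Y.d_d, hf.map_d]
  parity_d x := by simp [X.parity_d, Y.parity_d, hf.map_parity]; abel

theorem cone_parity {X : SuperComplex K V} {Y : SuperComplex K W} {f : V →ₗ[K] W}
    (hf : IsHom X Y f) (x : V) (y : W) :
    (cone hf).parity (x, y) = (-X.parity x, Y.parity y) :=
  rfl

theorem cone_d {X : SuperComplex K V} {Y : SuperComplex K W} {f : V →ₗ[K] W}
    (hf : IsHom X Y f) (x : V) (y : W) : (cone hf).d (x, y) = (-X.d x, f x + Y.d y) :=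
  rfl

theorem IsQuasiIso.cone_isAcyclic {X : SuperComplex K V} {Y : SuperComplex K W}
    {f : V →ₗ[K] W} (h : IsQuasiIso X Y f) (hf : IsHom X Y f) : (cone hf).IsAcyclic := by
  rintro ⟨x, y⟩ hxy
  obtain ⟨hx, hy⟩ : X.d x = 0 ∧ f x + Y.d y = 0 := by simpa [cone_d] using hxy
  obtain ⟨u, hu⟩ := h.injective x hx ⟨-y, by rw [map_neg]; exact eq_neg_of_add_eq_zero_left hy⟩
  have hcocycle : Y.d (y + f u) = 0 := by rw [map_add, ← hf.map_d, ← hu, add_comm, hy]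
  obtain ⟨v, z, hv, hvz⟩ := h.surjective _ hcocycle
  refine ⟨(v - u, -z), ?_⟩
  simp only [cone_d, map_sub, hv, hvz, ← hu, map_neg, Prod.mk.injEq]
  exact ⟨by abel, by abel⟩

theorem IsContraction.isHomotopyEquiv_of_cone {X : SuperComplex K V} {Y : SuperComplex K W}
    {f : V →ₗ[K] W} {hf : IsHom X Y f} {k : Module.End K (V × W)}
    (hk : (cone hf).IsContraction k) : IsHomotopyEquiv X Y f := by
  let a : Module.End K V := LinearMap.fst K V W ∘ₗ k ∘ₗ LinearMap.inl K V W
  let c : V →ₗ[K] W := LinearMap.snd K V W ∘ₗ k ∘ₗ LinearMap.inl K V W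
  let g : W →ₗ[K] V := LinearMap.fst K V W ∘ₗ k ∘ₗ LinearMap.inr K V W
  let e : Module.End K W := LinearMap.snd K V W ∘ₗ k ∘ₗ LinearMap.inr K V W
  have k_mk (x y) : k (x, y) = (a x + g y, c x + e y) := by
    rw [← LinearMap.coprod_comp_inl_inr k]
    rfl
  have odd_left (x) := hk.odd (x, 0)
  have odd_right (y) := hk.odd (0, y)
  have left (x) := hk.d_add (x, 0)
  have right (y) := hk.d_add (0, y)
  simp only [cone_parity, cone_d, k_mk, map_zero, neg_zero, add_zero, zero_add, map_neg,
    Prod.mk_add_mk, Prod.mk.injEq, Prod.neg_mk, neg_neg] at odd_left odd_right left right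
  have hg : IsHom Y X g := ⟨fun y => (neg_add_eq_zero.1 (right y).1).symm,
    fun y => (odd_right y).1⟩
  refine ⟨hf, g, hg, ⟨a, fun x => ?_, fun x => ?_⟩, ⟨-e, fun y => ?_, fun y => ?_⟩⟩
  · exact neg_eq_iff_eq_neg.1 (odd_left x).1
  · rw [LinearMap.comp_apply]
    linear_combination (norm := module) (left x).1
  · rw [LinearMap.neg_apply, (odd_right y).2, LinearMap.neg_apply, map_neg]
  · rw [LinearMap.comp_apply, LinearMap.neg_apply, LinearMap.neg_apply, map_neg]
    linear_combination (norm := module) (right y).2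

/-- The tensor product of super complexes, with the Koszul sign in the differential. -/
def tensor (X : SuperComplex K V) (Y : SuperComplex K W) : SuperComplex K (V ⊗[K] W) where
  parity := TensorProduct.map X.parity Y.parity
  d := TensorProduct.map X.d LinearMap.id + TensorProduct.map X.parity Y.d
  parity_parity x := by
    induction x with
    | zero => simp only [map_zero]
    | add x y hx hy => simp only [map_add, hx, hy]
    | tmul x y => simp only [TensorProduct.map_tmul, X.parity_parity, Y.parity_parity]
  d_d x := by
    induction x with
    | zero => simp only [map_zero]
    | add x y hx hy => rw [map_add, map_add, hx, hy, add_zero]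
    | tmul x y => simp [X.parity_d, X.d_d, Y.d_d, neg_tmul]
  parity_d x := by
    induction x with
    | zero => simp only [map_zero, neg_zero]
    | add x y hx hy => rw [map_add, map_add, map_add, map_add, hx, hy, neg_add]
    | tmul x y => simp [X.parity_d, Y.parity_d, neg_tmul, tmul_neg]; abel

theorem tensor_parity_tmul (X : SuperComplex K V) (Y : SuperComplex K W) (x : V) (y : W) :
    (X.tensor Y).parity (x ⊗ₜ y) = X.parity x ⊗ₜ Y.parity y :=
  rfl

theorem tensor_d_tmul (X : SuperComplex K V) (Y : SuperComplex K W) (x : V) (y : W) :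
    (X.tensor Y).d (x ⊗ₜ y) = X.d x ⊗ₜ y + X.parity x ⊗ₜ Y.d y :=
  rfl

theorem IsHom.tensor {X : SuperComplex K V} {Y : SuperComplex K W} {X₂ : SuperComplex K V₂}
    {Y₂ : SuperComplex K W₂} {f : V →ₗ[K] W} {f₂ : V₂ →ₗ[K] W₂} (hf : IsHom X Y f)
    (hf₂ : IsHom X₂ Y₂ f₂) :
    IsHom (X.tensor X₂) (Y.tensor Y₂) (TensorProduct.map f f₂) where
  map_d x := by
    induction x with
    | zero => simp only [map_zero]
    | add x y hx hy => simp only [map_add, hx, hy]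
    | tmul x y =>
      simp only [tensor_d_tmul, map_add, TensorProduct.map_tmul, hf.map_d, hf₂.map_d,
        hf.map_parity]
  map_parity x := by
    induction x with
    | zero => simp only [map_zero]
    | add x y hx hy => simp only [map_add, hx, hy]
    | tmul x y =>
      simp only [tensor_parity_tmul, TensorProduct.map_tmul, hf.map_parity, hf₂.map_parity]

theorem HomotopicToId.tensor {X : SuperComplex K V} {Y : SuperComplex K W}
    {a : Module.End K V} {b : Module.End K W} (ha : X.HomotopicToId a)
    (hb : Y.HomotopicToId b) (hom_b : IsHom Y Y b) :
    (X.tensor Y).HomotopicToId (TensorProduct.map a b) := by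
  obtain ⟨k, k_odd, hk⟩ := ha
  obtain ⟨l, l_odd, hl⟩ := hb
  refine ⟨TensorProduct.map k b + TensorProduct.map X.parity l, fun x => ?_, fun x => ?_⟩
  · induction x with
    | zero => simp only [map_zero, neg_zero]
    | add x y hx hy => rw [map_add, map_add, hx, hy, map_add, map_add, neg_add]
    | tmul x y =>
      simp only [tensor_parity_tmul, LinearMap.add_apply, TensorProduct.map_tmul, map_add,
        k_odd x, l_odd y, hom_b.map_parity, neg_tmul, tmul_neg, neg_add]
  · induction x with
    | zero => simp only [map_zero, add_zero]
    | add x y hx hy => simp only [map_add, hx, hy]; abel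
    | tmul x y =>
      simp only [tensor_d_tmul, LinearMap.add_apply, TensorProduct.map_tmul, map_add,
        k_odd x, X.parity_parity, X.parity_d, hom_b.map_d, hk x, hl y, neg_tmul, add_tmul,
        tmul_add]
      abel

theorem IsHomotopyEquiv.tensor {X : SuperComplex K V} {Y : SuperComplex K W}
    {X₂ : SuperComplex K V₂} {Y₂ : SuperComplex K W₂} {f : V →ₗ[K] W} {f₂ : V₂ →ₗ[K] W₂}
    (h : IsHomotopyEquiv X Y f) (h₂ : IsHomotopyEquiv X₂ Y₂ f₂) :
    IsHomotopyEquiv (X.tensor X₂) (Y.tensor Y₂) (TensorProduct.map f f₂) := by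
  obtain ⟨hf, g, hg, hgf, hfg⟩ := h
  obtain ⟨hf₂, g₂, hg₂, hgf₂, hfg₂⟩ := h₂
  refine ⟨hf.tensor hf₂, TensorProduct.map g g₂, hg.tensor hg₂, ?_, ?_⟩
  · rw [← TensorProduct.map_comp]
    exact hgf.tensor hgf₂ (hg₂.comp hf₂)
  · rw [← TensorProduct.map_comp]
    exact hfg.tensor hfg₂ (hf₂.comp hg₂)

/-- The direct sum of a family of super complexes. -/
def directSum {ι : Type*} {M : ι → Type*} [∀ i, AddCommGroup (M i)] [∀ i, Module K (M i)]
    (X : ∀ i, SuperComplex K (M i)) : SuperComplex K (⨁ i, M i) where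
  parity := DirectSum.lmap fun i => (X i).parity
  d := DirectSum.lmap fun i => (X i).d
  parity_parity x := by
    ext i
    simp only [DirectSum.lmap_apply, (X i).parity_parity]
  d_d x := by
    ext i
    simp only [DirectSum.lmap_apply, (X i).d_d, DirectSum.zero_apply]
  parity_d x := by
    ext i
    exact (X i).parity_d (x i)

section DirectSum

variable {ι : Type*} {M N : ι → Type*} [∀ i, AddCommGroup (M i)]
  [∀ i, Module K (M i)] [∀ i, AddCommGroup (N i)] [∀ i, Module K (N i)]
  {X : ∀ i, SuperComplex K (M i)} {Y : ∀ i, SuperComplex K (N i)}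

theorem IsHom.directSum {f : ∀ i, M i →ₗ[K] N i} (hf : ∀ i, IsHom (X i) (Y i) (f i)) :
    IsHom (directSum X) (directSum Y) (DirectSum.lmap f) where
  map_d x := by
    ext i
    exact (hf i).map_d (x i)
  map_parity x := by
    ext i
    exact (hf i).map_parity (x i)

theorem HomotopicToId.directSum {a : ∀ i, Module.End K (M i)}
    (ha : ∀ i, (X i).HomotopicToId (a i)) :
    (directSum X).HomotopicToId (DirectSum.lmap a) := by
  choose k k_odd hk using ha
  refine ⟨DirectSum.lmap k, fun x => ?_, fun x => ?_⟩
  · ext i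
    exact k_odd i (x i)
  · ext i
    exact hk i (x i)

theorem IsHomotopyEquiv.directSum {f : ∀ i, M i →ₗ[K] N i}
    (hf : ∀ i, IsHomotopyEquiv (X i) (Y i) (f i)) :
    IsHomotopyEquiv (directSum X) (directSum Y) (DirectSum.lmap f) := by
  choose f_hom g g_hom hgf hfg using hf
  refine ⟨IsHom.directSum f_hom, DirectSum.lmap g, IsHom.directSum g_hom, ?_, ?_⟩
  · rw [← DirectSum.lmap_comp]
    exact HomotopicToId.directSum hgf
  · rw [← DirectSum.lmap_comp]
    exact HomotopicToId.directSum hfg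

end DirectSum

end CommRing

section Field

variable {K V W : Type*} [Field K] [AddCommGroup V] [Module K V] [AddCommGroup W] [Module K W]

theorem IsAcyclic.exists_contracting_homotopy {X : SuperComplex K V} (hX : X.IsAcyclic) :
    ∃ k : Module.End K V, ∀ x, X.d (k x) + k (X.d x) = x := by
  let D : V →ₗ[K] X.d.ker := X.d.codRestrict _ X.d_d
  have hD : Function.Surjective D := by
    rintro ⟨x, hx⟩
    obtain ⟨y, hy⟩ := hX x hx
    exact ⟨y, Subtype.ext hy⟩
  obtain ⟨σ, hσ⟩ := D.exists_rightInverse_of_surjective (LinearMap.range_eq_top.2 hD)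
  have d_section (z : X.d.ker) : X.d (σ z) = z :=
    congrArg Subtype.val (LinearMap.congr_fun hσ z)
  let p : V →ₗ[K] X.d.ker := (LinearMap.id - σ ∘ₗ D).codRestrict _ fun x => by
    simp only [LinearMap.sub_apply, LinearMap.id_apply, LinearMap.comp_apply, LinearMap.mem_ker,
      map_sub, d_section]
    exact sub_self _
  have p_d (x) : p (X.d x) = D x := by
    have hDd : D (X.d x) = 0 := Subtype.ext (X.d_d x)
    refine Subtype.ext ?_
    change X.d x - σ (D (X.d x)) = X.d x
    rw [hDd, map_zero, sub_zero]
  refine ⟨σ ∘ₗ p, fun x => ?_⟩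
  simp only [LinearMap.comp_apply, d_section, p_d]
  exact sub_add_cancel x _

theorem IsAcyclic.exists_isContraction [NeZero (2 : K)] {X : SuperComplex K V}
    (hX : X.IsAcyclic) : ∃ k, X.IsContraction k := by
  obtain ⟨k, hk⟩ := hX.exists_contracting_homotopy
  refine ⟨(2⁻¹ : K) • (k - X.parity ∘ₗ k ∘ₗ X.parity), fun x => ?_, fun x => ?_⟩
  · simp only [LinearMap.smul_apply, LinearMap.sub_apply, LinearMap.comp_apply,
      X.parity_parity, map_smul, map_sub]
    module
  · have h_conj := congrArg X.parity (hk (X.parity x))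
    simp only [map_add, X.parity_parity, X.parity_d] at h_conj
    have h_half : (2⁻¹ : K) • (x + x) = x := by
      rw [← two_smul K, inv_smul_smul₀ two_ne_zero]
    simp only [LinearMap.smul_apply, LinearMap.sub_apply, LinearMap.comp_apply, map_smul,
      map_sub, X.parity_d, map_neg]
    linear_combination (norm := module) (2⁻¹ : K) • (hk x + h_conj) + h_half

theorem IsQuasiIso.isHomotopyEquiv [NeZero (2 : K)] {X : SuperComplex K V}
    {Y : SuperComplex K W} {f : V →ₗ[K] W} (h : IsQuasiIso X Y f) (hf : IsHom X Y f) :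
    IsHomotopyEquiv X Y f := by
  obtain ⟨k, hk⟩ := (h.cone_isAcyclic hf).exists_isContraction
  exact hk.isHomotopyEquiv_of_cone

end Field

end SuperComplex

/-! ### Symmetrizers and Coxeter relations -/

section Symmetrizer

variable {R : Type*} [Ring R]

/-- The sum `1 + s (m-1) + s (m-1) s (m-2) + ⋯ + s (m-1) ⋯ s 0`. When the `s i` act as adjacent
transpositions of `m + 1` letters, it is the sum over coset representatives of the subgroup
generated by `s 0, …, s (m-2)`. -/
def cosetSum (s : ℕ → R) : ℕ → R
  | 0 => 1
  | m + 1 => 1 + s m * cosetSum s m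

/-- The average over the symmetric group on `m + 1` letters, acting through adjacent
transpositions `s 0, …, s (m-1)`. -/
def symmetrizer (K : Type*) [Field K] [Algebra K R] (s : ℕ → R) : ℕ → R
  | 0 => 1
  | m + 1 => ((m : K) + 2)⁻¹ • (symmetrizer K s m * cosetSum s (m + 1))

/-- The Coxeter relations of the symmetric group on `m + 1` letters for `s 0, …, s (m-1)`. -/
structure CoxeterRelations (s : ℕ → R) (m : ℕ) : Prop where
  mul_self : ∀ i < m, s i * s i = 1
  commute : ∀ i j, i + 2 ≤ j → j < m → Commute (s i) (s j)
  braid : ∀ i, i + 1 < m → s i * s (i + 1) * s i = s (i + 1) * s i * s (i + 1)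

namespace CoxeterRelations

variable {s : ℕ → R} {m n : ℕ}

theorem mono (h : CoxeterRelations s n) (hmn : m ≤ n) : CoxeterRelations s m where
  mul_self i hi := h.mul_self i (hi.trans_le hmn)
  commute i j hij hj := h.commute i j hij (hj.trans_le hmn)
  braid i hi := h.braid i (hi.trans_le hmn)

theorem commute_cosetSum (h : CoxeterRelations s n) {j : ℕ} (hj : j < n) (hm : m < j) :
    Commute (s j) (cosetSum s m) := by
  induction m with
  | zero => exact Commute.one_right _
  | succ m ih =>
    exact (Commute.one_right _).add_right
      ((h.commute m j hm hj).symm.mul_right (ih (m.lt_succ_self.trans hm)))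

theorem mul_cosetSum_mul_last (h : CoxeterRelations s (m + 1)) {q : R}
    (hq : ∀ j < m, q * s j = q) :
    q * cosetSum s (m + 1) * s m = q * cosetSum s (m + 1) := by
  cases m with
  | zero =>
    simp only [cosetSum, mul_one, mul_add, add_mul, mul_assoc,
      h.mul_self 0 Nat.zero_lt_one]
    rw [add_comm]
  | succ m =>
    have h_top : q * (s (m + 1) * (s m * cosetSum s m)) * s (m + 1)
        = q * (s (m + 1) * (s m * cosetSum s m)) := by
      calc q * (s (m + 1) * (s m * cosetSum s m)) * s (m + 1)
          = q * (s (m + 1) * s m * s (m + 1)) * cosetSum s m := by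
            simp only [mul_assoc, (h.commute_cosetSum (Nat.lt_succ_self _) m.lt_succ_self).eq]
        _ = q * s m * s (m + 1) * s m * cosetSum s m := by
            rw [← h.braid m (Nat.lt_succ_self _)]
            simp only [mul_assoc]
        _ = q * (s (m + 1) * (s m * cosetSum s m)) := by
            rw [hq m m.lt_succ_self]
            simp only [mul_assoc]
    have h_sq : q * s (m + 1) * s (m + 1) = q := by
      rw [mul_assoc, h.mul_self _ (Nat.lt_succ_self _), mul_one]
    have h_expand : q * cosetSum s (m + 2)
        = q + q * s (m + 1) + q * (s (m + 1) * (s m * cosetSum s m)) := by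
      simp only [cosetSum, mul_add, mul_one, add_assoc]
    rw [h_expand, add_mul, add_mul, h_sq, h_top, add_comm q]

theorem mul_cosetSum_mul (h : CoxeterRelations s m) {q : R}
    (hq : ∀ j, j + 1 < m → q * s j = q) {i : ℕ} (hi : i < m) :
    q * cosetSum s m * s i = q * cosetSum s m := by
  induction m generalizing i q with
  | zero => exact absurd hi (Nat.not_lt_zero i)
  | succ m ih =>
    rcases Nat.lt_succ_iff_lt_or_eq.1 hi with hi | rfl
    · have hqs (j) (hj : j + 1 < m) : q * s m * s j = q * s m := by
        rw [mul_assoc, ← (h.commute j m hj m.lt_succ_self).eq, ← mul_assoc,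
          hq j (hj.trans m.lt_succ_self)]
      have h_tail := ih (h.mono m.le_succ) hqs hi
      simp only [cosetSum, mul_add, add_mul, mul_one, ← mul_assoc, h_tail,
        hq i (Nat.succ_lt_succ hi)]
    · exact h.mul_cosetSum_mul_last fun j hj => hq j (Nat.succ_lt_succ hj)

theorem symmetrizer_mul {K : Type*} [Field K] [Algebra K R] (h : CoxeterRelations s m) {i : ℕ}
    (hi : i < m) : symmetrizer K s m * s i = symmetrizer K s m := by
  induction m generalizing i with
  | zero => exact absurd hi (Nat.not_lt_zero i)
  | succ m ih =>
    rw [symmetrizer, smul_mul_assoc,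
      h.mul_cosetSum_mul (fun j hj => ih (h.mono m.le_succ) (Nat.lt_of_succ_lt_succ hj)) hi]

end CoxeterRelations

theorem cosetSum_one (m : ℕ) : cosetSum (fun _ => (1 : R)) m = (m : R) + 1 := by
  induction m with
  | zero => simp [cosetSum]
  | succ m ih => rw [cosetSum, ih, one_mul, Nat.cast_succ, add_comm]

variable {K : Type*} [Field K]

theorem symmetrizer_one [CharZero K] [Algebra K R] (m : ℕ) :
    symmetrizer K (fun _ => (1 : R)) m = 1 := by
  induction m with
  | zero => rfl
  | succ m ih =>
    have h_ne : (m : K) + 2 ≠ 0 := by exact_mod_cast (m + 1).succ_ne_zero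
    have h_sum : cosetSum (fun _ => (1 : R)) (m + 1) = ((m : K) + 2) • (1 : R) := by
      rw [cosetSum_one, ← Algebra.algebraMap_eq_smul_one, Nat.cast_succ, add_assoc,
        one_add_one_eq_two]
      simp only [map_add, map_natCast, map_ofNat]
    rw [symmetrizer, ih, one_mul, h_sum, inv_smul_smul₀ h_ne]

variable {N N' : Type*} [AddCommGroup N] [Module K N] [AddCommGroup N'] [Module K N']
  {s : ℕ → Module.End K N} {s' : ℕ → Module.End K N'} {f : N →ₗ[K] N'} {m : ℕ}

theorem map_cosetSum (h : ∀ i < m, ∀ x, f (s i x) = s' i (f x)) (x : N) :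
    f (cosetSum s m x) = cosetSum s' m (f x) := by
  induction m with
  | zero => rfl
  | succ m ih =>
    simp only [cosetSum, LinearMap.add_apply, Module.End.one_apply, Module.End.mul_apply,
      map_add, h m m.lt_succ_self, ih fun i hi => h i (hi.trans m.lt_succ_self)]

theorem map_symmetrizer (h : ∀ i < m, ∀ x, f (s i x) = s' i (f x)) (x : N) :
    f (symmetrizer K s m x) = symmetrizer K s' m (f x) := by
  induction m generalizing x with
  | zero => rfl
  | succ m ih =>
    simp only [symmetrizer, LinearMap.smul_apply, map_smul, Module.End.mul_apply,
      map_cosetSum h, ih fun i hi => h i (hi.trans m.lt_succ_self)]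

end Symmetrizer

/-! ### Tensor powers -/

section IteratedTensor

open DirectSum

/-- The tensor powers `V ⊗ (V ⊗ (⋯ ⊗ K))`, bundled so that a single recursion defines the
carriers together with their module structures. -/
noncomputable def iteratedTensorCat (K V : Type u) [Field K] [AddCommGroup V] [Module K V] :
    ℕ → ModuleCat.{u} K
  | 0 => ModuleCat.of K K
  | n + 1 => ModuleCat.of K (V ⊗[K] iteratedTensorCat K V n)

/-- The `n`-th tensor power of `V`, associated to the right, so that vectors are split off and
operators are defined by recursion at the front. -/
def IteratedTensor (K V : Type u) [Field K] [AddCommGroup V] [Module K V] (n : ℕ) : Type u :=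
  iteratedTensorCat K V n

namespace IteratedTensor

variable {K V W X : Type u} [Field K] [AddCommGroup V] [Module K V] [AddCommGroup W] [Module K W]
  [AddCommGroup X] [Module K X] {l m n : ℕ}

noncomputable instance : AddCommGroup (IteratedTensor K V n) :=
  inferInstanceAs (AddCommGroup (iteratedTensorCat K V n))

noncomputable instance : Module K (IteratedTensor K V n) :=
  inferInstanceAs (Module K (iteratedTensorCat K V n))

/-- The empty tensor. -/
noncomputable def nil : IteratedTensor K V 0 := (1 : K)

/-- Tensoring with a vector at the front. -/
noncomputable def cons : V →ₗ[K] IteratedTensor K V n →ₗ[K] IteratedTensor K V (n + 1) :=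
  TensorProduct.mk K V (IteratedTensor K V n)

/-- The tensor product of a map on the first factor with a map on the remaining ones. -/
noncomputable def mapCons (f : V →ₗ[K] W) (g : IteratedTensor K V m →ₗ[K] IteratedTensor K W n) :
    IteratedTensor K V (m + 1) →ₗ[K] IteratedTensor K W (n + 1) :=
  TensorProduct.map f g

@[simp]
theorem mapCons_cons (f : V →ₗ[K] W) (g : IteratedTensor K V m →ₗ[K] IteratedTensor K W n)
    (x : V) (w : IteratedTensor K V m) : mapCons f g (cons x w) = cons (f x) (g w) :=
  rfl

theorem mapCons_comp (f : W →ₗ[K] X) (g : IteratedTensor K W m →ₗ[K] IteratedTensor K X n)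
    (f' : V →ₗ[K] W) (g' : IteratedTensor K V l →ₗ[K] IteratedTensor K W m) :
    mapCons f g ∘ₗ mapCons f' g' = mapCons (f ∘ₗ f') (g ∘ₗ g') :=
  (TensorProduct.map_comp f g f' g').symm

theorem hom_ext_nil {f g : IteratedTensor K V 0 →ₗ[K] X} (h : f nil = g nil) : f = g :=
  LinearMap.ext_ring (R := K) h

theorem hom_ext_cons {f g : IteratedTensor K V (n + 1) →ₗ[K] X}
    (h : ∀ x w, f (cons x w) = g (cons x w)) : f = g :=
  TensorProduct.ext' h

/-- The `n`-th tensor power of a linear map. -/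
noncomputable def map (f : V →ₗ[K] W) : ∀ n, IteratedTensor K V n →ₗ[K] IteratedTensor K W n
  | 0 => (LinearMap.id : K →ₗ[K] K)
  | n + 1 => mapCons f (map f n)

end IteratedTensor

/-- The underlying module of the tensor algebra. -/
abbrev TensorModule (K V : Type u) [Field K] [AddCommGroup V] [Module K V] : Type u :=
  ⨁ n, IteratedTensor K V n

namespace TensorModule

variable {K V W X : Type u} [Field K] [AddCommGroup V] [Module K V] [AddCommGroup W] [Module K W]
  [AddCommGroup X] [Module K X]

/-- The inclusion of the `n`-th tensor power. -/
noncomputable abbrev of (n : ℕ) : IteratedTensor K V n →ₗ[K] TensorModule K V :=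
  DirectSum.lof K ℕ (IteratedTensor K V) n

/-- The empty tensor, that is the unit of the tensor algebra. -/
noncomputable def nil : TensorModule K V := of 0 IteratedTensor.nil

/-- Tensoring with a vector at the front. -/
noncomputable def cons : V →ₗ[K] TensorModule K V →ₗ[K] TensorModule K V :=
  (DirectSum.toModule K ℕ (V →ₗ[K] TensorModule K V) fun n =>
    IteratedTensor.cons.flip.compr₂ (of (n + 1))).flip

@[elab_as_elim]
theorem induction_on {p : TensorModule K V → Prop} (w : TensorModule K V)
    (of : ∀ n w, p (of n w)) (add : ∀ v w, p v → p w → p (v + w)) : p w :=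
  DirectSum.induction_on w (by simpa only [map_zero] using of 0 0) of add

theorem cons_of {n : ℕ} (x : V) (w : IteratedTensor K V n) :
    cons x (of n w) = of (n + 1) (IteratedTensor.cons x w) := by
  rw [cons, LinearMap.flip_apply, DirectSum.toModule_lof]
  rfl

theorem hom_ext {f g : TensorModule K V →ₗ[K] X} (h_nil : f nil = g nil)
    (h_cons : ∀ x w, f w = g w → f (cons x w) = g (cons x w)) : f = g := by
  refine DirectSum.linearMap_ext K fun n => ?_
  induction n with
  | zero => exact IteratedTensor.hom_ext_nil h_nil
  | succ n ih =>
    refine IteratedTensor.hom_ext_cons fun x w => ?_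
    rw [LinearMap.comp_apply, LinearMap.comp_apply, ← cons_of]
    exact h_cons x _ (LinearMap.congr_fun ih w)

/-- The components of `TensorModule.fold`. -/
noncomputable def foldAux (ρ : V →ₗ[K] Module.End K X) (x₀ : X) :
    ∀ n, IteratedTensor K V n →ₗ[K] X
  | 0 => LinearMap.toSpanSingleton K X x₀
  | n + 1 => TensorProduct.lift (ρ.compl₂ (foldAux ρ x₀ n))

/-- The linear map `x₁ ⊗ ⋯ ⊗ xₙ ↦ ρ x₁ (⋯ (ρ xₙ x₀))`. -/
noncomputable def fold (ρ : V →ₗ[K] Module.End K X) (x₀ : X) : TensorModule K V →ₗ[K] X :=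
  DirectSum.toModule K ℕ X (foldAux ρ x₀)

@[simp]
theorem fold_nil (ρ : V →ₗ[K] Module.End K X) (x₀ : X) : fold ρ x₀ nil = x₀ := by
  rw [fold, nil, DirectSum.toModule_lof]
  exact one_smul K x₀

@[simp]
theorem fold_cons (ρ : V →ₗ[K] Module.End K X) (x₀ : X) (x : V) (w : TensorModule K V) :
    fold ρ x₀ (cons x w) = ρ x (fold ρ x₀ w) := by
  induction w using TensorModule.induction_on with
  | add v w hv hw => simp only [map_add, hv, hw]
  | of n w =>
    rw [cons_of, fold, DirectSum.toModule_lof, DirectSum.toModule_lof]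
    rfl

/-- The linear map underlying the algebra map `T(V) → T(W)` induced by `f`. -/
noncomputable def map (f : V →ₗ[K] W) : TensorModule K V →ₗ[K] TensorModule K W :=
  DirectSum.lmap (IteratedTensor.map f)

theorem map_nil (f : V →ₗ[K] W) : map f nil = nil :=
  DirectSum.lmap_lof _ _ _

theorem map_cons (f : V →ₗ[K] W) (x : V) (w : TensorModule K V) :
    map f (cons x w) = cons (f x) (map f w) := by
  induction w using TensorModule.induction_on with
  | add v w hv hw => simp only [map_add, hv, hw]
  | of n w =>
    rw [cons_of, map, DirectSum.lmap_lof, DirectSum.lmap_lof, cons_of]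
    rfl

end TensorModule

namespace SuperComplex

variable {K V W : Type u} [Field K] [AddCommGroup V] [Module K V] [AddCommGroup W] [Module K W]

/-- The tensor powers of a super complex. -/
noncomputable def tensorPower (X : SuperComplex K V) : ∀ n, SuperComplex K (IteratedTensor K V n)
  | 0 => ⟨(1 : K →ₗ[K] K), (0 : K →ₗ[K] K), fun _ => rfl, fun _ => rfl, fun _ => neg_zero.symm⟩
  | n + 1 => X.tensor (tensorPower X n)

/-- The super complex underlying the tensor dg algebra. -/
noncomputable def tensorModule (X : SuperComplex K V) : SuperComplex K (TensorModule K V) :=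
  directSum X.tensorPower

theorem tensorPower_d_cons (X : SuperComplex K V) {n : ℕ} (x : V) (w : IteratedTensor K V n) :
    (X.tensorPower (n + 1)).d (IteratedTensor.cons x w)
      = IteratedTensor.cons (X.d x) w
        + IteratedTensor.cons (X.parity x) ((X.tensorPower n).d w) :=
  rfl

theorem tensorModule_d_of (X : SuperComplex K V) {n : ℕ} (w : IteratedTensor K V n) :
    X.tensorModule.d (TensorModule.of n w) = TensorModule.of n ((X.tensorPower n).d w) :=
  DirectSum.lmap_lof _ _ _

@[simp]
theorem tensorModule_d_nil (X : SuperComplex K V) : X.tensorModule.d TensorModule.nil = 0 :=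
  (X.tensorModule_d_of _).trans (map_zero _)

theorem tensorModule_d_cons (X : SuperComplex K V) (x : V) (w : TensorModule K V) :
    X.tensorModule.d (TensorModule.cons x w)
      = TensorModule.cons (X.d x) w + TensorModule.cons (X.parity x) (X.tensorModule.d w) := by
  induction w using TensorModule.induction_on with
  | add v w hv hw => rw [map_add, map_add, hv, hw, map_add, map_add, map_add]; abel
  | of n w =>
    rw [TensorModule.cons_of, tensorModule_d_of, tensorModule_d_of, tensorPower_d_cons,
      TensorModule.cons_of, TensorModule.cons_of, map_add]

theorem IsHomotopyEquiv.tensorPower {X : SuperComplex K V} {Y : SuperComplex K W}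
    {f : V →ₗ[K] W} (h : IsHomotopyEquiv X Y f) (n : ℕ) :
    IsHomotopyEquiv (X.tensorPower n) (Y.tensorPower n) (IteratedTensor.map f n) := by
  induction n with
  | zero => exact IsHomotopyEquiv.refl (X.tensorPower 0)
  | succ n ih => exact h.tensor ih

theorem IsHomotopyEquiv.tensorModule {X : SuperComplex K V} {Y : SuperComplex K W}
    {f : V →ₗ[K] W} (h : IsHomotopyEquiv X Y f) :
    IsHomotopyEquiv X.tensorModule Y.tensorModule (TensorModule.map f) :=
  IsHomotopyEquiv.directSum h.tensorPower

end SuperComplex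

end IteratedTensor

/-! ### Total spaces -/

section Total

open DirectSum SuperComplex

variable {K : Type u} [Field K] {C D E : ℤ → Type u} [∀ i, AddCommGroup (C i)]
  [∀ i, Module K (C i)] [∀ i, AddCommGroup (D i)] [∀ i, Module K (D i)]
  [∀ i, AddCommGroup (E i)] [∀ i, Module K (E i)]

theorem lof_induction_on {p : (⨁ i, C i) → Prop} (x : ⨁ i, C i)
    (lof : ∀ i a, p (DirectSum.lof K ℤ C i a)) (add : ∀ x y, p x → p y → p (x + y)) : p x :=
  DirectSum.induction_on x (by simpa only [map_zero] using lof 0 0) lof add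

theorem mem_of_forall_lof_mem {S : Submodule K (⨁ i, C i)} {x : ⨁ i, C i}
    (h : ∀ i, lof K ℤ C i (x i) ∈ S) : x ∈ S := by
  classical
  rw [← DirectSum.sum_support_of x]
  exact S.sum_mem fun i _ => h i

theorem lof_gcast {i j : ℤ} (h : i = j) (x : C i) :
    lof K ℤ C j (gcast h x) = lof K ℤ C i x := by
  subst h
  rfl

/-- The endomorphism of the total space given by a family of maps of degree one. -/
noncomputable def totalD (d : ∀ i, C i →ₗ[K] C (i + 1)) : Module.End K (⨁ i, C i) :=
  DirectSum.toModule K ℤ _ fun i => lof K ℤ C (i + 1) ∘ₗ d i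

@[simp]
theorem totalD_lof (d : ∀ i, C i →ₗ[K] C (i + 1)) (i : ℤ) (x : C i) :
    totalD d (lof K ℤ C i x) = lof K ℤ C (i + 1) (d i x) :=
  DirectSum.toModule_lof _ _ _

theorem totalD_apply (d : ∀ i, C i →ₗ[K] C (i + 1)) {i j : ℤ} (h : i + 1 = j)
    (x : ⨁ i, C i) : totalD d x j = gcast h (d i (x i)) := by
  subst h
  change totalD d x (i + 1) = d i (x i)
  induction x using lof_induction_on (K := K) (C := C) with
  | add x y hx hy => rw [map_add, DirectSum.add_apply, hx, hy, DirectSum.add_apply, map_add]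
  | lof k a =>
    rw [totalD_lof]
    rcases eq_or_ne k i with rfl | hk
    · rw [DirectSum.lof_apply, DirectSum.lof_apply]
    · rw [DirectSum.lof_eq_of, DirectSum.lof_eq_of, DirectSum.of_eq_of_ne _ _ _ (by omega),
        DirectSum.of_eq_of_ne _ _ _ hk.symm, map_zero]

/-- The bilinear operation on total spaces given by its graded components. -/
noncomputable def totalBilin (b : ∀ i j, C i →ₗ[K] D j →ₗ[K] E (i + j)) :
    (⨁ i, C i) →ₗ[K] (⨁ i, D i) →ₗ[K] ⨁ i, E i :=
  DirectSum.toModule K ℤ _ fun i =>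
    (DirectSum.toModule K ℤ (C i →ₗ[K] ⨁ i, E i) fun j =>
      ((b i j).compr₂ (lof K ℤ E (i + j))).flip).flip

@[simp]
theorem totalBilin_lof_lof (b : ∀ i j, C i →ₗ[K] D j →ₗ[K] E (i + j)) (i j : ℤ) (x : C i)
    (y : D j) :
    totalBilin b (lof K ℤ C i x) (lof K ℤ D j y) = lof K ℤ E (i + j) (b i j x y) := by
  rw [totalBilin, DirectSum.toModule_lof, LinearMap.flip_apply, DirectSum.toModule_lof]
  rfl

variable (K C) in
/-- The endomorphism of the total space acting by `(-1) ^ i` in degree `i`. -/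
noncomputable def totalParity : Module.End K (⨁ i, C i) :=
  DirectSum.lmap fun i => (-1 : K) ^ i • LinearMap.id

@[simp]
theorem totalParity_lof (i : ℤ) (x : C i) :
    totalParity K C (lof K ℤ C i x) = (-1 : K) ^ i • lof K ℤ C i x := by
  rw [totalParity, DirectSum.lmap_lof, LinearMap.smul_apply, map_smul, LinearMap.id_apply]

theorem lmap_totalParity (f : ∀ i, C i →ₗ[K] D i) (x : ⨁ i, C i) :
    lmap f (totalParity K C x) = totalParity K D (lmap f x) := by
  induction x using lof_induction_on (K := K) (C := C) with
  | lof i a => simp only [totalParity_lof, DirectSum.lmap_lof, map_smul]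
  | add x y hx hy => simp only [map_add, hx, hy]

/-- The super complex on the total space of a cochain complex. -/
noncomputable def totalComplex (d : ∀ i, C i →ₗ[K] C (i + 1))
    (d_sq : ∀ i (x : C i), d (i + 1) (d i x) = 0) : SuperComplex K (⨁ i, C i) where
  parity := totalParity K C
  d := totalD d
  parity_parity x := by
    induction x using lof_induction_on (K := K) (C := C) with
    | lof i a =>
      rw [totalParity_lof, map_smul, totalParity_lof, smul_smul, ← mul_zpow, neg_one_mul, neg_neg,
        one_zpow, one_smul]
    | add x y hx hy => rw [map_add, map_add, hx, hy]
  d_d x := by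
    induction x using lof_induction_on (K := K) (C := C) with
    | lof i a => rw [totalD_lof, totalD_lof, d_sq, map_zero]
    | add x y hx hy => rw [map_add, map_add, hx, hy, add_zero]
  parity_d x := by
    induction x using lof_induction_on (K := K) (C := C) with
    | lof i a =>
      rw [totalD_lof, totalParity_lof, totalParity_lof, map_smul, totalD_lof,
        zpow_add_one₀ (neg_ne_zero.2 one_ne_zero), mul_neg_one, neg_smul]
    | add x y hx hy => rw [map_add, map_add, map_add, map_add, hx, hy, neg_add]

section Cohomology

variable {dC : ∀ i, C i →ₗ[K] C (i + 1)} {dD : ∀ i, D i →ₗ[K] D (i + 1)}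
  {hdC : ∀ i (x : C i), dC (i + 1) (dC i x) = 0} {hdD : ∀ i (x : D i), dD (i + 1) (dD i x) = 0}
  {f : ∀ i, C i →ₗ[K] D i}

theorem map_apply_eq_zero_of_totalD_eq_zero {x : ⨁ i, C i} (h : totalD dC x = 0) (i : ℤ) :
    dC i (x i) = 0 := by
  have h_apply := totalD_apply dC (rfl : i + 1 = i + 1) x
  rw [h] at h_apply
  exact h_apply.symm

theorem totalComplex_isAcyclic
    (h : ∀ (i : ℤ) (x : C i), dC i x = 0 →
      ∃ y : C (i - 1), gcast (C := C) (show i - 1 + 1 = i by omega) (dC (i - 1) y) = x) :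
    (totalComplex dC hdC).IsAcyclic := by
  intro x hx
  refine mem_of_forall_lof_mem (S := (totalD dC).range) fun i => ?_
  obtain ⟨y, hy⟩ := h i (x i) (map_apply_eq_zero_of_totalD_eq_zero hx i)
  exact ⟨lof K ℤ C (i - 1) y, by rw [totalD_lof, ← hy, lof_gcast]⟩

theorem IsQIsoMap.isQuasiIso_lmap (h : IsQIsoMap K dC dD f) :
    IsQuasiIso (totalComplex dC hdC) (totalComplex dD hdD) (lmap f) := by
  refine ⟨fun y hy => ?_, fun x hx ⟨z, hz⟩ => ?_⟩
  · have hmem : y ∈ (totalD dC).ker.map (lmap f) ⊔ (totalD dD).range := by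
      refine mem_of_forall_lof_mem fun i => ?_
      obtain ⟨x, z, hx, hxz⟩ := h.1 i (y i) (map_apply_eq_zero_of_totalD_eq_zero hy i)
      have hy_eq : lof K ℤ D i (y i)
          = lmap f (lof K ℤ C i x) + totalD dD (lof K ℤ D (i - 1) (-z)) := by
        rw [DirectSum.lmap_lof, hxz, map_neg, map_neg, totalD_lof, map_add, lof_gcast,
          add_neg_cancel_right]
      rw [hy_eq]
      refine Submodule.add_mem_sup ⟨_, ?_, rfl⟩ ⟨_, rfl⟩
      rw [SetLike.mem_coe, LinearMap.mem_ker, totalD_lof, hx, map_zero]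
    obtain ⟨_, ⟨x, hx, rfl⟩, _, ⟨z, rfl⟩, hxz⟩ := Submodule.mem_sup.1 hmem
    refine ⟨x, -z, hx, ?_⟩
    rw [map_neg, ← hxz]
    exact (add_neg_cancel_right _ _).symm
  · obtain ⟨w, hw⟩ : x ∈ (totalD dC).range := by
      refine mem_of_forall_lof_mem fun i => ?_
      have hfx : f i (x i) = gcast (show i - 1 + 1 = i by omega) (dD (i - 1) (z (i - 1))) := by
        rw [← DirectSum.lmap_apply, hz]
        exact totalD_apply dD _ z
      obtain ⟨w, hw⟩ := h.2 i (x i) (map_apply_eq_zero_of_totalD_eq_zero hx i) ⟨_, hfx⟩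
      exact ⟨lof K ℤ C (i - 1) w, by rw [totalD_lof, hw, lof_gcast]⟩
    exact ⟨w, hw.symm⟩

theorem IsQIsoMap.of_isQuasiIso_lmap
    (h : IsQuasiIso (totalComplex dC hdC) (totalComplex dD hdD) (lmap f)) :
    IsQIsoMap K dC dD f := by
  refine ⟨fun i y hy => ?_, fun i x hx ⟨z, hz⟩ => ?_⟩
  · have hcocycle : totalD dD (lof K ℤ D i y) = 0 := by rw [totalD_lof, hy, map_zero]
    obtain ⟨x, z, hx, hxz⟩ := h.surjective _ hcocycle
    refine ⟨x i, z (i - 1), map_apply_eq_zero_of_totalD_eq_zero hx i, ?_⟩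
    rw [← DirectSum.lmap_apply, hxz, ← totalD_apply, DirectSum.add_apply, DirectSum.lof_apply]
    rfl
  · have hcocycle : totalD dC (lof K ℤ C i x) = 0 := by rw [totalD_lof, hx, map_zero]
    obtain ⟨w, hw⟩ := h.injective _ hcocycle ⟨lof K ℤ D (i - 1) z, by
      rw [DirectSum.lmap_lof, hz, lof_gcast]
      exact (totalD_lof dD _ z).symm⟩
    refine ⟨w (i - 1), ?_⟩
    rw [← totalD_apply]
    exact (DirectSum.lof_apply K i x).symm.trans (by rw [hw]; rfl)

end Cohomology

end Total

/-! ### Koszul swaps and brackets on tensor powers -/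

namespace IteratedTensor

open DirectSum

variable {K V W X : Type u} [Field K] [AddCommGroup V] [Module K V] [AddCommGroup W] [Module K W]
  [AddCommGroup X] [Module K X] {m n : ℕ}

theorem mapCons_id : mapCons LinearMap.id (LinearMap.id : IteratedTensor K V n →ₗ[K] _)
    = LinearMap.id :=
  TensorProduct.map_id

theorem mapCons_add (f : V →ₗ[K] W) (g g' : IteratedTensor K V m →ₗ[K] IteratedTensor K W n) :
    mapCons f (g + g') = mapCons f g + mapCons f g' :=
  TensorProduct.map_add_right f g g'

theorem mapCons_neg (f : V →ₗ[K] W) (g : IteratedTensor K V m →ₗ[K] IteratedTensor K W n) :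
    mapCons f (-g) = -mapCons f g :=
  hom_ext_cons fun x w => map_neg (cons (f x)) (g w)

theorem hom_ext_cons_cons {f g : IteratedTensor K V (n + 2) →ₗ[K] X}
    (h : ∀ x y w, f (cons x (cons y w)) = g (cons x (cons y w))) : f = g :=
  hom_ext_cons fun x => LinearMap.congr_fun <|
    hom_ext_cons (f := f ∘ₗ cons x) (g := g ∘ₗ cons x) (h x)

/-- The identification `V ⊗ (V ⊗ W) ≃ (V ⊗ V) ⊗ W` for the first two tensor factors. -/
noncomputable def assocFront (n : ℕ) :
    IteratedTensor K V (n + 2) ≃ₗ[K] (V ⊗[K] V) ⊗[K] IteratedTensor K V n :=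
  (TensorProduct.assoc K V V (IteratedTensor K V n)).symm

section Graded

variable {A : ℤ → Type u} [∀ i, AddCommGroup (A i)] [∀ i, Module K (A i)]

theorem hom_ext_cons_lof {f g : IteratedTensor K (⨁ i, A i) (n + 1) →ₗ[K] X}
    (h : ∀ i a w, f (cons (lof K ℤ A i a) w) = g (cons (lof K ℤ A i a) w)) : f = g := by
  refine hom_ext_cons fun x w => ?_
  induction x using lof_induction_on (K := K) (C := A) with
  | lof i a => exact h i a w
  | add x y hx hy => simp only [map_add, LinearMap.add_apply, hx, hy]

theorem hom_ext_cons_lof₂ {f g : IteratedTensor K (⨁ i, A i) (n + 2) →ₗ[K] X}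
    (h : ∀ i a j b w, f (cons (lof K ℤ A i a) (cons (lof K ℤ A j b) w))
      = g (cons (lof K ℤ A i a) (cons (lof K ℤ A j b) w))) : f = g :=
  hom_ext_cons_lof fun i a => LinearMap.congr_fun <|
    hom_ext_cons_lof (f := f ∘ₗ cons (lof K ℤ A i a)) (g := g ∘ₗ cons (lof K ℤ A i a)) (h i a)

theorem hom_ext_cons_lof₃ {f g : IteratedTensor K (⨁ i, A i) (n + 3) →ₗ[K] X}
    (h : ∀ i a j b k c w,
      f (cons (lof K ℤ A i a) (cons (lof K ℤ A j b) (cons (lof K ℤ A k c) w)))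
        = g (cons (lof K ℤ A i a) (cons (lof K ℤ A j b) (cons (lof K ℤ A k c) w)))) : f = g :=
  hom_ext_cons_lof fun i a => LinearMap.congr_fun <|
    hom_ext_cons_lof₂ (f := f ∘ₗ cons (lof K ℤ A i a)) (g := g ∘ₗ cons (lof K ℤ A i a)) (h i a)

variable (K A) in
/-- The Koszul swap of the first two tensor factors. -/
noncomputable def swapFront (n : ℕ) :
    IteratedTensor K (⨁ i, A i) (n + 2) →ₗ[K] IteratedTensor K (⨁ i, A i) (n + 2) :=
  (assocFront n).symm.toLinearMap ∘ₗ
    (TensorProduct.gradedComm K A A).toLinearMap.rTensor (IteratedTensor K (⨁ i, A i) n) ∘ₗ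
      (assocFront n).toLinearMap

theorem swapFront_cons_cons (i j : ℤ) (a : A i) (b : A j)
    (w : IteratedTensor K (⨁ i, A i) n) :
    swapFront K A n (cons (lof K ℤ A i a) (cons (lof K ℤ A j b) w))
      = (-1 : K) ^ (i * j) • cons (lof K ℤ A j b) (cons (lof K ℤ A i a) w) := by
  have hsign : TensorProduct.gradedComm K A A (lof K ℤ A i a ⊗ₜ lof K ℤ A j b)
      = (-1 : K) ^ (i * j) • (lof K ℤ A j b ⊗ₜ[K] lof K ℤ A i a) := by
    rw [TensorProduct.gradedComm_of_tmul_of, Units.smul_def, ← Int.cast_smul_eq_zsmul K, mul_comm]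
    exact congrArg (· • _) (Int.cast_negOnePow K (i * j))
  change (assocFront n).symm (
    TensorProduct.gradedComm K A A (lof K ℤ A i a ⊗ₜ lof K ℤ A j b) ⊗ₜ[K] w) = _
  rw [hsign, ← TensorProduct.smul_tmul', map_smul]
  rfl

end Graded

/-- The linear map applying a bilinear operation to the first two tensor factors. -/
noncomputable def mergeFront (b : V →ₗ[K] V →ₗ[K] V) (n : ℕ) :
    IteratedTensor K V (n + 2) →ₗ[K] IteratedTensor K V (n + 1) :=
  (TensorProduct.lift b).rTensor (IteratedTensor K V n) ∘ₗ (assocFront n).toLinearMap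

end IteratedTensor

namespace DGLA

open DirectSum IteratedTensor SuperComplex

variable (K : Type u) [Field K] (A : ℤ → Type u) [∀ i, AddCommGroup (A i)] [∀ i, Module K (A i)]

/-- The `i`-th adjacent Koszul transposition of a tensor power, the identity if there is no
`(i + 1)`-st factor. -/
noncomputable def swapAt :
    ℕ → ∀ n : ℕ, IteratedTensor K (⨁ i, A i) n →ₗ[K] IteratedTensor K (⨁ i, A i) n
  | 0, n + 2 => swapFront K A n
  | i + 1, n + 1 => mapCons LinearMap.id (swapAt i n)
  | _, _ => LinearMap.id

variable {K A} in
theorem swapAt_zero_cons_cons {n : ℕ} (i j : ℤ) (a : A i) (b : A j)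
    (w : IteratedTensor K (⨁ i, A i) n) :
    swapAt K A 0 (n + 2) (cons (lof K ℤ A i a) (cons (lof K ℤ A j b) w))
      = (-1 : K) ^ (i * j) • cons (lof K ℤ A j b) (cons (lof K ℤ A i a) w) :=
  swapFront_cons_cons i j a b w

theorem swapAt_succ (i n : ℕ) :
    swapAt K A (i + 1) (n + 1) = mapCons LinearMap.id (swapAt K A i n) :=
  rfl

theorem swapAt_comp_swapAt (i n : ℕ) : swapAt K A i n ∘ₗ swapAt K A i n = LinearMap.id := by
  induction i generalizing n with
  | zero =>
    rcases n with _ | _ | n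
    · rfl
    · rfl
    · refine hom_ext_cons_lof₂ fun i a j b w => ?_
      rw [LinearMap.comp_apply, swapAt_zero_cons_cons, map_smul, swapAt_zero_cons_cons, smul_smul,
        mul_comm j i, ← mul_zpow, neg_one_mul, neg_neg, one_zpow, one_smul, LinearMap.id_apply]
  | succ i ih =>
    rcases n with _ | n
    · rfl
    · rw [swapAt_succ, mapCons_comp, ih, LinearMap.id_comp, mapCons_id]

theorem swapAt_comm {i j : ℕ} (h : i + 2 ≤ j) (n : ℕ) :
    swapAt K A i n ∘ₗ swapAt K A j n = swapAt K A j n ∘ₗ swapAt K A i n := by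
  induction i generalizing n j with
  | zero =>
    obtain ⟨j, rfl⟩ := Nat.exists_eq_add_of_le' h
    rcases n with _ | _ | n
    · rfl
    · rfl
    · refine hom_ext_cons_lof₂ fun i a k b w => ?_
      simp only [swapAt_succ, LinearMap.comp_apply, mapCons_cons, LinearMap.id_apply,
        swapAt_zero_cons_cons, map_smul]
  | succ i ih =>
    obtain ⟨j, rfl⟩ := Nat.exists_eq_add_of_le' (show 1 ≤ j by omega)
    rcases n with _ | n
    · rfl
    · simp only [swapAt_succ, mapCons_comp, ih (show i + 2 ≤ j by omega)]

theorem swapAt_braid {i n : ℕ} (h : i + 3 ≤ n) :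
    swapAt K A i n ∘ₗ swapAt K A (i + 1) n ∘ₗ swapAt K A i n
      = swapAt K A (i + 1) n ∘ₗ swapAt K A i n ∘ₗ swapAt K A (i + 1) n := by
  induction i generalizing n with
  | zero =>
    obtain ⟨n, rfl⟩ := Nat.exists_eq_add_of_le' h
    refine hom_ext_cons_lof₃ fun i a j b k c w => ?_
    simp only [swapAt_succ, LinearMap.comp_apply, mapCons_cons, LinearMap.id_apply,
      swapAt_zero_cons_cons, map_smul, smul_smul]
    congr 1
    ring
  | succ i ih =>
    obtain ⟨n, rfl⟩ := Nat.exists_eq_add_of_le' (show 1 ≤ n by omega)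
    simp only [swapAt_succ, mapCons_comp, ← ih (show i + 3 ≤ n by omega)]

variable [DGLA K A]

/-- The bracket on the total space of a dgla. -/
noncomputable def bracket : (⨁ i, A i) →ₗ[K] (⨁ i, A i) →ₗ[K] ⨁ i, A i :=
  totalBilin (DGLA.bk (K := K) (A := A))

/-- The super complex underlying a dgla. -/
noncomputable def toSuperComplex : SuperComplex K (⨁ i, A i) :=
  totalComplex (DGLA.d (K := K) (A := A)) DGLA.d_sq

variable {A} in
theorem exists_bracket_lof (i j : ℤ) (a : A i) (b : A j) :
    ∃ c : A (i + j), bracket K A (lof K ℤ A i a) (lof K ℤ A j b) = lof K ℤ A (i + j) c :=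
  ⟨_, totalBilin_lof_lof _ _ _ _ _⟩

variable {A} in
theorem bracket_antisymm (i j : ℤ) (a : A i) (b : A j) :
    bracket K A (lof K ℤ A j b) (lof K ℤ A i a)
      = -((-1 : K) ^ (i * j) • bracket K A (lof K ℤ A i a) (lof K ℤ A j b)) := by
  simp only [bracket, totalBilin_lof_lof]
  rw [DGLA.antisymm, lof_gcast, map_neg, map_smul]

variable {A} in
theorem bracket_jacobi (i j k : ℤ) (a : A i) (b : A j) (c : A k) :
    bracket K A (lof K ℤ A i a) (bracket K A (lof K ℤ A j b) (lof K ℤ A k c))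
      = bracket K A (bracket K A (lof K ℤ A i a) (lof K ℤ A j b)) (lof K ℤ A k c)
        + (-1 : K) ^ (i * j) •
          bracket K A (lof K ℤ A j b) (bracket K A (lof K ℤ A i a) (lof K ℤ A k c)) := by
  simp only [bracket, totalBilin_lof_lof]
  rw [DGLA.jacobi, map_add, map_smul, lof_gcast, lof_gcast]

theorem d_bracket (x y : ⨁ i, A i) :
    (toSuperComplex K A).d (bracket K A x y)
      = bracket K A ((toSuperComplex K A).d x) y
        + bracket K A ((toSuperComplex K A).parity x) ((toSuperComplex K A).d y) := by
  induction x using lof_induction_on (K := K) (C := A) with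
  | add x x' hx hx' => simp only [map_add, LinearMap.add_apply, hx, hx']; abel
  | lof i a =>
    induction y using lof_induction_on (K := K) (C := A) with
    | add y y' hy hy' => simp only [map_add, hy, hy']; abel
    | lof j b =>
      simp only [toSuperComplex, totalComplex, bracket, totalBilin_lof_lof, totalD_lof,
        totalParity_lof, map_smul, LinearMap.smul_apply]
      rw [DGLA.leibniz, map_add, map_smul, lof_gcast, lof_gcast]

theorem parity_bracket (x y : ⨁ i, A i) :
    (toSuperComplex K A).parity (bracket K A x y)
      = bracket K A ((toSuperComplex K A).parity x) ((toSuperComplex K A).parity y) := by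
  induction x using lof_induction_on (K := K) (C := A) with
  | add x x' hx hx' => simp only [map_add, LinearMap.add_apply, hx, hx']
  | lof i a =>
    induction y using lof_induction_on (K := K) (C := A) with
    | add y y' hy hy' => simp only [map_add, hy, hy']
    | lof j b =>
      simp only [toSuperComplex, totalComplex, bracket, totalBilin_lof_lof,
        totalParity_lof, map_smul, LinearMap.smul_apply, smul_smul]
      rw [zpow_add₀ (neg_ne_zero.2 one_ne_zero), mul_comm]

/-- The map from the `(n + 1)`-st to the `n`-th tensor power bracketing the factors `i` and
`i + 1`, zero if there is no `(i + 1)`-st factor. -/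
noncomputable def bracketAt :
    ℕ → ∀ n : ℕ, IteratedTensor K (⨁ i, A i) (n + 1) →ₗ[K] IteratedTensor K (⨁ i, A i) n
  | 0, n + 1 => mergeFront (bracket K A) n
  | i + 1, n + 1 => mapCons LinearMap.id (bracketAt i n)
  | _, 0 => 0

variable {A} in
theorem bracketAt_zero_cons_cons {n : ℕ} (x y : ⨁ i, A i) (w : IteratedTensor K (⨁ i, A i) n) :
    bracketAt K A 0 (n + 1) (cons x (cons y w)) = cons (bracket K A x y) w :=
  rfl

theorem bracketAt_zero_right (i : ℕ) : bracketAt K A i 0 = 0 := by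
  cases i <;> rfl

theorem bracketAt_succ (i n : ℕ) :
    bracketAt K A (i + 1) (n + 1) = mapCons LinearMap.id (bracketAt K A i n) :=
  rfl

theorem bracketAt_comp_swapAt (i n : ℕ) :
    bracketAt K A i n ∘ₗ swapAt K A i (n + 1) = -bracketAt K A i n := by
  induction i generalizing n with
  | zero =>
    rcases n with _ | n
    · simp only [bracketAt_zero_right, LinearMap.zero_comp, neg_zero]
    · refine hom_ext_cons_lof₂ fun i a j b w => ?_
      rw [LinearMap.comp_apply, swapAt_zero_cons_cons, map_smul, bracketAt_zero_cons_cons,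
        LinearMap.neg_apply, bracketAt_zero_cons_cons, bracket_antisymm K j i b a, map_neg,
        map_smul, LinearMap.neg_apply, LinearMap.smul_apply, mul_comm j i, neg_neg]
  | succ i ih =>
    rcases n with _ | n
    · simp only [bracketAt_zero_right, LinearMap.zero_comp, neg_zero]
    · rw [swapAt_succ, bracketAt_succ, mapCons_comp, ih, LinearMap.id_comp, mapCons_neg]

theorem bracketAt_comp_swapAt_of_lt {i j n : ℕ} (h : i + 2 ≤ j) (hj : j < n) :
    bracketAt K A j n ∘ₗ swapAt K A i (n + 1) = swapAt K A i n ∘ₗ bracketAt K A j n := by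
  induction i generalizing n j with
  | zero =>
    obtain ⟨j, rfl⟩ := Nat.exists_eq_add_of_le' h
    obtain ⟨n, rfl⟩ := Nat.exists_eq_add_of_le' (show 2 ≤ n by omega)
    refine hom_ext_cons_lof₂ fun i a k b w => ?_
    simp only [bracketAt_succ, LinearMap.comp_apply, mapCons_cons, LinearMap.id_apply,
      swapAt_zero_cons_cons, map_smul]
  | succ i ih =>
    obtain ⟨j, rfl⟩ := Nat.exists_eq_add_of_le' (show 1 ≤ j by omega)
    obtain ⟨n, rfl⟩ := Nat.exists_eq_add_of_le' (show 1 ≤ n by omega)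
    simp only [swapAt_succ, bracketAt_succ, mapCons_comp,
      ih (show i + 2 ≤ j by omega) (show j < n by omega)]

theorem bracketAt_comp_swapAt_succ_of_lt {i j : ℕ} (h : i < j) (n : ℕ) :
    bracketAt K A i n ∘ₗ swapAt K A (j + 1) (n + 1) = swapAt K A j n ∘ₗ bracketAt K A i n := by
  induction i generalizing n j with
  | zero =>
    obtain ⟨j, rfl⟩ := Nat.exists_eq_add_of_le' h
    rcases n with _ | n
    · simp only [bracketAt_zero_right, LinearMap.zero_comp, LinearMap.comp_zero]
    · exact hom_ext_cons_cons fun _ _ _ => rfl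
  | succ i ih =>
    obtain ⟨j, rfl⟩ := Nat.exists_eq_add_of_le' (show 1 ≤ j by omega)
    rcases n with _ | n
    · simp only [bracketAt_zero_right, LinearMap.zero_comp, LinearMap.comp_zero]
    · simp only [swapAt_succ, bracketAt_succ, mapCons_comp, ← ih (show i < j by omega)]

theorem bracketAt_comp_bracketAt_of_lt {i j : ℕ} (h : i < j) (n : ℕ) :
    bracketAt K A i n ∘ₗ bracketAt K A (j + 1) (n + 1)
      = bracketAt K A j n ∘ₗ bracketAt K A i (n + 1) := by
  induction i generalizing n j with
  | zero =>
    obtain ⟨j, rfl⟩ := Nat.exists_eq_add_of_le' h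
    rcases n with _ | n
    · simp only [bracketAt_zero_right, LinearMap.zero_comp]
    · exact hom_ext_cons_cons fun _ _ _ => rfl
  | succ i ih =>
    obtain ⟨j, rfl⟩ := Nat.exists_eq_add_of_le' (show 1 ≤ j by omega)
    rcases n with _ | n
    · simp only [bracketAt_zero_right, LinearMap.zero_comp]
    · rw [bracketAt_succ K A i n, bracketAt_succ K A j n, bracketAt_succ K A (j + 1) (n + 1),
        bracketAt_succ K A i (n + 1), mapCons_comp, mapCons_comp, ih (show i < j by omega)]

theorem bracketAt_succ_comp_swapAt_comp_swapAt_succ {i n : ℕ} (h : i + 2 ≤ n) :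
    bracketAt K A (i + 1) n ∘ₗ swapAt K A i (n + 1) ∘ₗ swapAt K A (i + 1) (n + 1)
      = swapAt K A i n ∘ₗ bracketAt K A i n := by
  induction i generalizing n with
  | zero =>
    obtain ⟨n, rfl⟩ := Nat.exists_eq_add_of_le' h
    refine hom_ext_cons_lof₃ fun i a j b k c w => ?_
    obtain ⟨ab, hab⟩ := exists_bracket_lof K i j a b
    simp only [swapAt_succ, bracketAt_succ, LinearMap.comp_apply, mapCons_cons,
      LinearMap.id_apply, bracketAt_zero_cons_cons, hab, swapAt_zero_cons_cons, map_smul, smul_smul]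
    rw [← zpow_add₀ (neg_ne_zero.2 one_ne_zero)]
    congr 2
    ring
  | succ i ih =>
    obtain ⟨n, rfl⟩ := Nat.exists_eq_add_of_le' (show 1 ≤ n by omega)
    rw [swapAt_succ K A i n, bracketAt_succ K A i n, swapAt_succ K A i (n + 1),
      swapAt_succ K A (i + 1) (n + 1), bracketAt_succ K A (i + 1) n, mapCons_comp, mapCons_comp,
      mapCons_comp, ih (show i + 2 ≤ n by omega), LinearMap.id_comp]

variable {A} in
theorem bracket_jacobi_left (i j k : ℤ) (a : A i) (b : A j) (c : A k) :
    (-1 : K) ^ (j * k) •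
        bracket K A (bracket K A (lof K ℤ A i a) (lof K ℤ A k c)) (lof K ℤ A j b)
      = bracket K A (bracket K A (lof K ℤ A i a) (lof K ℤ A j b)) (lof K ℤ A k c)
        + ((-1 : K) ^ (i * j) * (-1) ^ (i * k)) •
          bracket K A (bracket K A (lof K ℤ A j b) (lof K ℤ A k c)) (lof K ℤ A i a) := by
  obtain ⟨ac, hac⟩ := exists_bracket_lof K i k a c
  obtain ⟨bc, hbc⟩ := exists_bracket_lof K j k b c
  have hjac := bracket_jacobi K i j k a b c
  rw [hac, hbc] at hjac ⊢
  have hsign_left : (-1 : K) ^ ((j + k) * i) = (-1) ^ (i * j) * (-1) ^ (i * k) := by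
    rw [← zpow_add₀ (neg_ne_zero.2 one_ne_zero), ← mul_add, mul_comm]
  have hsign_right : (-1 : K) ^ (i * j) * (-1) ^ ((i + k) * j) = (-1) ^ (j * k) := by
    rw [← zpow_add₀ (neg_ne_zero.2 one_ne_zero),
      show i * j + (i + k) * j = 2 * (i * j) + j * k by ring,
      zpow_add₀ (neg_ne_zero.2 one_ne_zero), zpow_mul, zpow_ofNat, neg_one_sq, one_zpow, one_mul]
  rw [bracket_antisymm K (j + k) i bc a, bracket_antisymm K (i + k) j ac b, smul_neg, smul_smul,
    hsign_left, hsign_right] at hjac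
  linear_combination (norm := module) hjac

theorem bracketAt_comp_bracketAt (i n : ℕ) :
    bracketAt K A i n ∘ₗ bracketAt K A i (n + 1) ∘ₗ swapAt K A (i + 1) (n + 2)
      = bracketAt K A i n ∘ₗ bracketAt K A i (n + 1)
        + bracketAt K A i n ∘ₗ bracketAt K A i (n + 1) ∘ₗ
          swapAt K A (i + 1) (n + 2) ∘ₗ swapAt K A i (n + 2) := by
  induction i generalizing n with
  | zero =>
    rcases n with _ | n
    · simp only [bracketAt_zero_right, LinearMap.zero_comp, add_zero]
    · refine hom_ext_cons_lof₃ fun i a j b k c w => ?_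
      simp only [swapAt_succ, LinearMap.comp_apply, LinearMap.add_apply, mapCons_cons,
        LinearMap.id_apply, swapAt_zero_cons_cons, map_smul, bracketAt_zero_cons_cons, smul_smul]
      simpa only [map_add, map_smul, LinearMap.add_apply, LinearMap.smul_apply] using
        congrArg (fun x => cons x w) (bracket_jacobi_left K i j k a b c)
  | succ i ih =>
    rcases n with _ | n
    · simp only [bracketAt_zero_right, LinearMap.zero_comp, add_zero]
    · simp only [swapAt_succ, bracketAt_succ, mapCons_comp, ← mapCons_add, LinearMap.id_comp]
      exact congrArg (mapCons LinearMap.id) (ih n)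

variable {K A}

theorem d_lof (i : ℤ) (a : A i) :
    (toSuperComplex K A).d (lof K ℤ A i a) = lof K ℤ A (i + 1) (DGLA.d (K := K) i a) :=
  totalD_lof _ _ _

theorem parity_lof (i : ℤ) (a : A i) :
    (toSuperComplex K A).parity (lof K ℤ A i a) = (-1 : K) ^ i • lof K ℤ A i a :=
  totalParity_lof _ _

theorem tensorPower_d_comp_swapAt (i n : ℕ) :
    ((toSuperComplex K A).tensorPower n).d ∘ₗ swapAt K A i n
      = swapAt K A i n ∘ₗ ((toSuperComplex K A).tensorPower n).d := by
  induction i generalizing n with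
  | zero =>
    rcases n with _ | _ | n
    · rfl
    · rfl
    · refine hom_ext_cons_lof₂ fun i a j b w => ?_
      have hsign_left : (-1 : K) ^ ((i + 1) * j) = (-1) ^ (i * j) * (-1) ^ j := by
        rw [add_mul, one_mul, zpow_add₀ (neg_ne_zero.2 one_ne_zero)]
      have hsign_right : (-1 : K) ^ i * (-1) ^ (i * (j + 1)) = (-1) ^ (i * j) := by
        rw [mul_add, mul_one, zpow_add₀ (neg_ne_zero.2 one_ne_zero), mul_left_comm, ← mul_zpow,
          neg_one_mul, neg_neg, one_zpow, mul_one]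
      simp only [LinearMap.comp_apply, swapAt_zero_cons_cons, map_smul, tensorPower_d_cons,
        map_add, d_lof, parity_lof, LinearMap.smul_apply, smul_smul, hsign_left, hsign_right]
      module
  | succ i ih =>
    rcases n with _ | n
    · rfl
    · refine hom_ext_cons fun x w => ?_
      simp only [swapAt_succ, LinearMap.comp_apply, tensorPower_d_cons, mapCons_cons,
        LinearMap.id_apply, map_add]
      exact congrArg _ (congrArg _ (LinearMap.congr_fun (ih n) w))

theorem tensorPower_d_comp_bracketAt (i n : ℕ) :
    ((toSuperComplex K A).tensorPower n).d ∘ₗ bracketAt K A i n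
      = bracketAt K A i n ∘ₗ ((toSuperComplex K A).tensorPower (n + 1)).d := by
  induction i generalizing n with
  | zero =>
    rcases n with _ | n
    · simp only [bracketAt_zero_right, LinearMap.zero_comp, LinearMap.comp_zero]
    · refine hom_ext_cons_cons fun x y w => ?_
      simp only [LinearMap.comp_apply, bracketAt_zero_cons_cons, tensorPower_d_cons, map_add,
        LinearMap.add_apply, d_bracket, parity_bracket]
      abel
  | succ i ih =>
    rcases n with _ | n
    · simp only [bracketAt_zero_right, LinearMap.zero_comp, LinearMap.comp_zero]
    · refine hom_ext_cons fun x w => ?_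
      simp only [bracketAt_succ, LinearMap.comp_apply, tensorPower_d_cons, mapCons_cons,
        LinearMap.id_apply, map_add]
      exact congrArg _ (congrArg _ (LinearMap.congr_fun (ih n) w))

end DGLA

namespace DGLAHom

open DirectSum IteratedTensor DGLA

variable {K : Type u} [Field K] {A A' : ℤ → Type u} [∀ i, AddCommGroup (A i)]
  [∀ i, Module K (A i)] [DGLA K A] [∀ i, AddCommGroup (A' i)] [∀ i, Module K (A' i)] [DGLA K A']

/-- The map of total spaces given by a morphism of dglas. -/
noncomputable def total (h : DGLAHom K A A') : (⨁ i, A i) →ₗ[K] ⨁ i, A' i :=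
  lmap h.f

theorem total_lof (h : DGLAHom K A A') (i : ℤ) (a : A i) :
    h.total (lof K ℤ A i a) = lof K ℤ A' i (h.f i a) :=
  lmap_lof _ _ _

theorem total_isHom (h : DGLAHom K A A') :
    SuperComplex.IsHom (toSuperComplex K A) (toSuperComplex K A') h.total where
  map_d x := by
    induction x using lof_induction_on (K := K) (C := A) with
    | lof i a => rw [d_lof, total_lof, total_lof, d_lof, h.map_d]
    | add x y hx hy => simp only [map_add, hx, hy]
  map_parity x := lmap_totalParity h.f x

theorem total_bracket (h : DGLAHom K A A') (x y : ⨁ i, A i) :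
    h.total (bracket K A x y) = bracket K A' (h.total x) (h.total y) := by
  induction x using lof_induction_on (K := K) (C := A) with
  | add x x' hx hx' => simp only [map_add, LinearMap.add_apply, hx, hx']
  | lof i a =>
    induction y using lof_induction_on (K := K) (C := A) with
    | add y y' hy hy' => simp only [map_add, hy, hy']
    | lof j b =>
      rw [total_lof, total_lof, bracket, bracket, totalBilin_lof_lof, totalBilin_lof_lof,
        total_lof, h.map_bk]

theorem map_comp_swapAt (h : DGLAHom K A A') (i n : ℕ) :
    IteratedTensor.map h.total n ∘ₗ swapAt K A i n
      = swapAt K A' i n ∘ₗ IteratedTensor.map h.total n := by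
  induction i generalizing n with
  | zero =>
    rcases n with _ | _ | n
    · rfl
    · rfl
    · refine hom_ext_cons_lof₂ fun i a j b w => ?_
      simp only [IteratedTensor.map, LinearMap.comp_apply, swapAt_zero_cons_cons, map_smul,
        mapCons_cons, total_lof]
  | succ i ih =>
    rcases n with _ | n
    · rfl
    · simp only [IteratedTensor.map, swapAt_succ, mapCons_comp, ih, LinearMap.id_comp,
        LinearMap.comp_id]

theorem map_comp_bracketAt (h : DGLAHom K A A') (i n : ℕ) :
    IteratedTensor.map h.total n ∘ₗ bracketAt K A i n
      = bracketAt K A' i n ∘ₗ IteratedTensor.map h.total (n + 1) := by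
  induction i generalizing n with
  | zero =>
    rcases n with _ | n
    · simp only [bracketAt_zero_right, LinearMap.zero_comp, LinearMap.comp_zero]
    · refine hom_ext_cons_cons fun x y w => ?_
      simp only [IteratedTensor.map, LinearMap.comp_apply, bracketAt_zero_cons_cons,
        mapCons_cons, total_bracket]
  | succ i ih =>
    rcases n with _ | n
    · simp only [bracketAt_zero_right, LinearMap.zero_comp, LinearMap.comp_zero]
    · rw [bracketAt_succ, bracketAt_succ, IteratedTensor.map, IteratedTensor.map, mapCons_comp,
        mapCons_comp, ih, LinearMap.id_comp, LinearMap.comp_id]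

end DGLAHom

/-! ### The Poincaré–Birkhoff–Witt projection -/

namespace DGLA

open DirectSum IteratedTensor

variable {K : Type u} [Field K] {A : ℤ → Type u} [∀ i, AddCommGroup (A i)] [∀ i, Module K (A i)]
  [DGLA K A]

/-- The affine transposition `(w, m) ↦ (sᵢ w, m + φ (bᵢ w))`, where `sᵢ` swaps and `bᵢ` brackets
the tensor factors `i` and `i + 1`. It records the relation `w = sᵢ w + bᵢ w` of the enveloping
algebra while keeping track of the lower-order term. -/
noncomputable def affineSwap (n : ℕ)
    (φ : IteratedTensor K (⨁ i, A i) n →ₗ[K] TensorModule K (⨁ i, A i)) (i : ℕ) :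
    Module.End K (IteratedTensor K (⨁ i, A i) (n + 1) × TensorModule K (⨁ i, A i)) :=
  LinearMap.prod (swapAt K A i (n + 1) ∘ₗ LinearMap.fst K _ _)
    (LinearMap.snd K _ _ + φ ∘ₗ bracketAt K A i n ∘ₗ LinearMap.fst K _ _)

theorem affineSwap_apply (n : ℕ)
    (φ : IteratedTensor K (⨁ i, A i) n →ₗ[K] TensorModule K (⨁ i, A i)) (i : ℕ)
    (w : IteratedTensor K (⨁ i, A i) (n + 1)) (m : TensorModule K (⨁ i, A i)) :
    affineSwap n φ i (w, m) = (swapAt K A i (n + 1) w, m + φ (bracketAt K A i n w)) :=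
  rfl

section AffineSwap

variable {m : ℕ} {φ : IteratedTensor K (⨁ i, A i) (m + 1) →ₗ[K] TensorModule K (⨁ i, A i)}
  {ψ : IteratedTensor K (⨁ i, A i) m →ₗ[K] TensorModule K (⨁ i, A i)}

theorem affineSwap_mul_self (n : ℕ)
    (φ : IteratedTensor K (⨁ i, A i) n →ₗ[K] TensorModule K (⨁ i, A i)) (i : ℕ) :
    affineSwap n φ i * affineSwap n φ i = 1 := by
  refine LinearMap.ext fun ⟨w, a⟩ => ?_
  have hswap : swapAt K A i (n + 1) (swapAt K A i (n + 1) w) = w :=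
    LinearMap.congr_fun (swapAt_comp_swapAt K A i (n + 1)) w
  have hbracket : bracketAt K A i n (swapAt K A i (n + 1) w) = -bracketAt K A i n w :=
    LinearMap.congr_fun (bracketAt_comp_swapAt K A i n) w
  simp only [Module.End.mul_apply, affineSwap_apply, Module.End.one_apply, hswap, hbracket,
    map_neg, add_neg_cancel_right]

theorem affineSwap_commute
    (hφ : ∀ i < m, ∀ w, φ w = φ (swapAt K A i (m + 1) w) + ψ (bracketAt K A i m w))
    {i j : ℕ} (hij : i + 2 ≤ j) (hj : j < m + 1) :
    Commute (affineSwap (m + 1) φ i) (affineSwap (m + 1) φ j) := by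
  obtain ⟨j, rfl⟩ := Nat.exists_eq_add_of_le' (show 1 ≤ j by omega)
  refine LinearMap.ext fun ⟨w, a⟩ => ?_
  have hlow : bracketAt K A (j + 1) (m + 1) (swapAt K A i (m + 2) w)
      = swapAt K A i (m + 1) (bracketAt K A (j + 1) (m + 1) w) :=
    LinearMap.congr_fun (bracketAt_comp_swapAt_of_lt K A hij hj) w
  have hhigh : bracketAt K A i (m + 1) (swapAt K A (j + 1) (m + 2) w)
      = swapAt K A j (m + 1) (bracketAt K A i (m + 1) w) :=
    LinearMap.congr_fun (bracketAt_comp_swapAt_succ_of_lt K A (by omega) (m + 1)) w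
  have hbracket : bracketAt K A i m (bracketAt K A (j + 1) (m + 1) w)
      = bracketAt K A j m (bracketAt K A i (m + 1) w) :=
    LinearMap.congr_fun (bracketAt_comp_bracketAt_of_lt K A (by omega) m) w
  simp only [Module.End.mul_apply, affineSwap_apply, Prod.mk.injEq]
  refine ⟨LinearMap.congr_fun (swapAt_comm K A hij (m + 2)) w, ?_⟩
  rw [hlow, hhigh, hφ i (by omega) (bracketAt K A (j + 1) (m + 1) w),
    hφ j (by omega) (bracketAt K A i (m + 1) w), hbracket]
  abel

theorem affineSwap_braid
    (hφ : ∀ i < m, ∀ w, φ w = φ (swapAt K A i (m + 1) w) + ψ (bracketAt K A i m w))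
    {i : ℕ} (hi : i < m) :
    affineSwap (m + 1) φ i * affineSwap (m + 1) φ (i + 1) * affineSwap (m + 1) φ i
      = affineSwap (m + 1) φ (i + 1) * affineSwap (m + 1) φ i * affineSwap (m + 1) φ (i + 1) := by
  refine LinearMap.ext fun ⟨w, a⟩ => ?_
  have hswap (j : ℕ) (w : IteratedTensor K (⨁ i, A i) (m + 2)) :
      swapAt K A j (m + 2) (swapAt K A j (m + 2) w) = w :=
    LinearMap.congr_fun (swapAt_comp_swapAt K A j (m + 2)) w
  have hslide (w : IteratedTensor K (⨁ i, A i) (m + 2)) :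
      bracketAt K A (i + 1) (m + 1) (swapAt K A i (m + 2) (swapAt K A (i + 1) (m + 2) w))
        = swapAt K A i (m + 1) (bracketAt K A i (m + 1) w) :=
    LinearMap.congr_fun (bracketAt_succ_comp_swapAt_comp_swapAt_succ K A (by omega)) w
  have hφ_bracket (w : IteratedTensor K (⨁ i, A i) (m + 2)) :
      φ (bracketAt K A i (m + 1) w)
        = φ (bracketAt K A (i + 1) (m + 1) (swapAt K A i (m + 2) (swapAt K A (i + 1) (m + 2) w)))
          + ψ (bracketAt K A i m (bracketAt K A i (m + 1) w)) := by
    rw [hslide]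
    exact hφ i hi _
  have hjacobi := congrArg ψ (LinearMap.congr_fun (bracketAt_comp_bracketAt K A i m) w)
  simp only [LinearMap.add_apply, LinearMap.comp_apply, map_add] at hjacobi
  simp only [Module.End.mul_apply, affineSwap_apply, Prod.mk.injEq]
  refine ⟨LinearMap.congr_fun (swapAt_braid K A (by omega)) w, ?_⟩
  rw [hφ_bracket w, hφ_bracket (swapAt K A (i + 1) (m + 2) w),
    hφ_bracket (swapAt K A (i + 1) (m + 2) (swapAt K A i (m + 2) w)), hswap (i + 1),
    hswap (i + 1), hswap i, hjacobi]
  abel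

theorem coxeterRelations_affineSwap
    (hφ : ∀ i < m, ∀ w, φ w = φ (swapAt K A i (m + 1) w) + ψ (bracketAt K A i m w)) :
    CoxeterRelations (affineSwap (m + 1) φ) (m + 1) where
  mul_self i _ := affineSwap_mul_self (m + 1) φ i
  commute _ _ hij hj := affineSwap_commute hφ hij hj
  braid _ hi := affineSwap_braid hφ (by omega)

end AffineSwap

/-- A linear map on the tensor module that identifies a tensor with its transposes up to the
bracket: it factors through the quotient of the tensor algebra by the relations
`xy - (-1)^{|x||y|} yx = [x, y]`. -/
def RespectsCommutators {W : Type*} [AddCommGroup W] [Module K W]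
    (π : TensorModule K (⨁ i, A i) →ₗ[K] W) : Prop :=
  ∀ n, ∀ i < n, ∀ w, π (TensorModule.of (n + 1) w)
    = π (TensorModule.of (n + 1) (swapAt K A i (n + 1) w))
      + π (TensorModule.of n (bracketAt K A i n w))

variable (K A) in
/-- The restriction of `pbwProjection` to the `n`-th tensor power: symmetrize, with the
lower-order terms already projected. -/
noncomputable def pbwComponent :
    (n : ℕ) → IteratedTensor K (⨁ i, A i) n →ₗ[K] TensorModule K (⨁ i, A i)
  | 0 => TensorModule.of 0
  | n + 1 => (TensorModule.of (n + 1)).coprod LinearMap.id ∘ₗ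
      symmetrizer K (affineSwap n (pbwComponent n)) n ∘ₗ LinearMap.inl K _ _

variable (K A) in
/-- The Poincaré–Birkhoff–Witt projection of the tensor module: its image is the space of
graded symmetric tensors and its kernel is spanned by the relations of the enveloping algebra. -/
noncomputable def pbwProjection : TensorModule K (⨁ i, A i) →ₗ[K] TensorModule K (⨁ i, A i) :=
  toModule K ℕ _ (pbwComponent K A)

theorem pbwProjection_of (n : ℕ) (w : IteratedTensor K (⨁ i, A i) n) :
    pbwProjection K A (TensorModule.of n w) = pbwComponent K A n w :=
  toModule_lof _ _ _

theorem pbwComponent_succ (n : ℕ) (w : IteratedTensor K (⨁ i, A i) (n + 1)) :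
    pbwComponent K A (n + 1) w = (TensorModule.of (n + 1)).coprod LinearMap.id
      (symmetrizer K (affineSwap n (pbwComponent K A n)) n (w, 0)) :=
  rfl

section CharZero

variable [CharZero K]

theorem symmetrizer_affineSwap_inr (n : ℕ)
    (φ : IteratedTensor K (⨁ i, A i) n →ₗ[K] TensorModule K (⨁ i, A i)) (k : ℕ)
    (m : TensorModule K (⨁ i, A i)) :
    symmetrizer K (affineSwap n φ) k (0, m) = (0, m) := by
  have h := map_symmetrizer (s := fun _ => 1) (s' := affineSwap n φ) (m := k)
    (f := LinearMap.inr K _ _) (fun i _ x => by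
      simp only [Module.End.one_apply, LinearMap.inr_apply, affineSwap_apply, map_zero,
        add_zero]) m
  rw [symmetrizer_one] at h
  exact h.symm

theorem pbwComponent_swapAt (n : ℕ) : ∀ i < n, ∀ w, pbwComponent K A (n + 1) w
    = pbwComponent K A (n + 1) (swapAt K A i (n + 1) w)
      + pbwComponent K A n (bracketAt K A i n w) := by
  induction n with
  | zero => exact fun i hi => absurd hi i.not_lt_zero
  | succ n ih =>
    intro i hi w
    have habsorb := LinearMap.congr_fun
      ((coxeterRelations_affineSwap ih).symmetrizer_mul (K := K) hi) (w, 0)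
    have hsplit (v : IteratedTensor K (⨁ i, A i) (n + 2)) (a : TensorModule K (⨁ i, A i)) :
        (v, a) = (v, 0) + (0, a) := by
      rw [Prod.mk_add_mk, add_zero, zero_add]
    rw [Module.End.mul_apply, affineSwap_apply, zero_add, hsplit, map_add,
      symmetrizer_affineSwap_inr] at habsorb
    rw [pbwComponent_succ, ← habsorb, map_add, ← pbwComponent_succ, LinearMap.coprod_apply,
      map_zero, zero_add, LinearMap.id_apply]

theorem respectsCommutators_pbwProjection : RespectsCommutators (pbwProjection K A) := by
  intro n i hi w
  simp only [pbwProjection_of]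
  exact pbwComponent_swapAt n i hi w

theorem RespectsCommutators.comp_pbwProjection {W : Type*} [AddCommGroup W] [Module K W]
    {π : TensorModule K (⨁ i, A i) →ₗ[K] W} (hπ : RespectsCommutators π) :
    π ∘ₗ pbwProjection K A = π := by
  refine linearMap_ext K fun n => LinearMap.ext fun w => ?_
  change π (pbwProjection K A (TensorModule.of n w)) = π (TensorModule.of n w)
  rw [pbwProjection_of]
  induction n with
  | zero => rfl
  | succ n ih =>
    have h := map_symmetrizer (s := affineSwap n (pbwComponent K A n)) (s' := fun _ => 1) (m := n)
      (f := π ∘ₗ (TensorModule.of (n + 1)).coprod LinearMap.id) (fun i hi ⟨w, m⟩ => by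
        simp only [affineSwap_apply, LinearMap.comp_apply, LinearMap.coprod_apply, map_add,
          LinearMap.id_apply, Module.End.one_apply]
        rw [ih, hπ n i hi w]
        abel) (w, 0)
    rw [symmetrizer_one] at h
    rw [pbwComponent_succ]
    refine h.trans ?_
    rw [Module.End.one_apply, LinearMap.comp_apply, LinearMap.coprod_apply, map_zero, add_zero]

theorem pbwProjection_cons_pbwProjection (x : ⨁ i, A i) (m : TensorModule K (⨁ i, A i)) :
    pbwProjection K A (TensorModule.cons x (pbwProjection K A m))
      = pbwProjection K A (TensorModule.cons x m) := by
  have h : RespectsCommutators (pbwProjection K A ∘ₗ TensorModule.cons x) := fun n i hi w => by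
    simp only [LinearMap.comp_apply, TensorModule.cons_of]
    exact respectsCommutators_pbwProjection (n + 1) (i + 1) (by omega) (cons x w)
  exact LinearMap.congr_fun h.comp_pbwProjection m

end CharZero

section Naturality

variable {A' : ℤ → Type u} [∀ i, AddCommGroup (A' i)] [∀ i, Module K (A' i)] [DGLA K A']

theorem lmap_pbwProjection
    {f : ∀ n, IteratedTensor K (⨁ i, A i) n →ₗ[K] IteratedTensor K (⨁ i, A' i) n}
    (hswap : ∀ i n, f n ∘ₗ swapAt K A i n = swapAt K A' i n ∘ₗ f n)
    (hbracket : ∀ i n, f n ∘ₗ bracketAt K A i n = bracketAt K A' i n ∘ₗ f (n + 1))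
    (m : TensorModule K (⨁ i, A i)) :
    lmap f (pbwProjection K A m) = pbwProjection K A' (lmap f m) := by
  suffices h : lmap f ∘ₗ pbwProjection K A = pbwProjection K A' ∘ₗ lmap f from
    LinearMap.congr_fun h m
  have hof (n : ℕ) (w : IteratedTensor K (⨁ i, A i) n) :
      lmap f (TensorModule.of n w) = TensorModule.of n (f n w) :=
    lmap_lof _ _ _
  refine linearMap_ext K fun n => LinearMap.ext fun w => ?_
  change lmap f (pbwProjection K A (TensorModule.of n w))
    = pbwProjection K A' (lmap f (TensorModule.of n w))
  rw [hof, pbwProjection_of, pbwProjection_of]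
  induction n with
  | zero => exact hof 0 w
  | succ n ih =>
    have h := map_symmetrizer (s := affineSwap n (pbwComponent K A n))
      (s' := affineSwap n (pbwComponent K A' n)) (m := n)
      (f := LinearMap.prodMap (f (n + 1)) (lmap f)) (fun i _ ⟨w, m⟩ => by
        simp only [affineSwap_apply, LinearMap.prodMap_apply, map_add, ih]
        exact Prod.ext (LinearMap.congr_fun (hswap i (n + 1)) w)
          (congrArg (fun v => lmap f m + pbwComponent K A' n v)
            (LinearMap.congr_fun (hbracket i n) w))) (w, 0)
    simp only [LinearMap.prodMap_apply, map_zero] at h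
    rw [pbwComponent_succ, pbwComponent_succ, ← h]
    simp only [LinearMap.coprod_apply, map_add, hof, LinearMap.id_apply]

theorem tensorModule_d_pbwProjection (m : TensorModule K (⨁ i, A i)) :
    (toSuperComplex K A).tensorModule.d (pbwProjection K A m)
      = pbwProjection K A ((toSuperComplex K A).tensorModule.d m) :=
  lmap_pbwProjection tensorPower_d_comp_swapAt tensorPower_d_comp_bracketAt m

theorem map_pbwProjection (h : DGLAHom K A A') (m : TensorModule K (⨁ i, A i)) :
    TensorModule.map h.total (pbwProjection K A m)
      = pbwProjection K A' (TensorModule.map h.total m) :=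
  lmap_pbwProjection h.map_comp_swapAt h.map_comp_bracketAt m

end Naturality

end DGLA

/-! ### Differential graded algebras -/

namespace DGAlg

open DirectSum

variable (K : Type u) [Field K] (U : ℤ → Type u) [∀ i, AddCommGroup (U i)]
  [∀ i, Module K (U i)] [DGAlg K U]

/-- The multiplication on the total space of a dg algebra. -/
noncomputable def totalMul : (⨁ i, U i) →ₗ[K] Module.End K (⨁ i, U i) :=
  totalBilin DGAlg.mul

/-- The unit of the total space of a dg algebra. -/
noncomputable def totalOne : ⨁ i, U i :=
  lof K ℤ U 0 (DGAlg.one K)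

/-- The super complex underlying a dg algebra. -/
noncomputable def toSuperComplex : SuperComplex K (⨁ i, U i) :=
  totalComplex DGAlg.d DGAlg.d_sq

variable {K U}

theorem totalMul_lof_lof (i j : ℤ) (x : U i) (y : U j) :
    totalMul K U (lof K ℤ U i x) (lof K ℤ U j y)
      = lof K ℤ U (i + j) (DGAlg.mul (K := K) i j x y) :=
  totalBilin_lof_lof _ _ _ _ _

theorem toSuperComplex_d_lof (i : ℤ) (x : U i) :
    (toSuperComplex K U).d (lof K ℤ U i x) = lof K ℤ U (i + 1) (DGAlg.d (K := K) i x) :=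
  totalD_lof _ _ _

theorem toSuperComplex_parity_lof (i : ℤ) (x : U i) :
    (toSuperComplex K U).parity (lof K ℤ U i x) = (-1 : K) ^ i • lof K ℤ U i x :=
  totalParity_lof _ _

theorem toSuperComplex_d_totalOne : (toSuperComplex K U).d (totalOne K U) = 0 := by
  rw [totalOne, toSuperComplex_d_lof, DGAlg.d_one, map_zero]

theorem totalOne_apply_zero : totalOne K U 0 = DGAlg.one K :=
  lof_apply K 0 _

theorem totalOne_apply_of_ne {i : ℤ} (hi : i ≠ 0) : totalOne K U i = 0 :=
  of_eq_of_ne _ _ _ hi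

theorem totalOne_mul (x : ⨁ i, U i) : totalMul K U (totalOne K U) x = x := by
  induction x using lof_induction_on (K := K) (C := U) with
  | lof i x => rw [totalOne, totalMul_lof_lof, DGAlg.one_mul, lof_gcast]
  | add x y hx hy => rw [map_add, hx, hy]

theorem mul_totalOne (x : ⨁ i, U i) : totalMul K U x (totalOne K U) = x := by
  induction x using lof_induction_on (K := K) (C := U) with
  | lof i x => rw [totalOne, totalMul_lof_lof, DGAlg.mul_one, lof_gcast]
  | add x y hx hy => rw [map_add, LinearMap.add_apply, hx, hy]

theorem totalMul_assoc (x y z : ⨁ i, U i) :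
    totalMul K U (totalMul K U x y) z = totalMul K U x (totalMul K U y z) := by
  induction x using lof_induction_on (K := K) (C := U) with
  | add x x' hx hx' => simp only [map_add, LinearMap.add_apply, hx, hx']
  | lof i x =>
    induction y using lof_induction_on (K := K) (C := U) with
    | add y y' hy hy' => simp only [map_add, LinearMap.add_apply, hy, hy']
    | lof j y =>
      induction z using lof_induction_on (K := K) (C := U) with
      | add z z' hz hz' => simp only [map_add, hz, hz']
      | lof k z => simp only [totalMul_lof_lof, DGAlg.mul_assoc, lof_gcast]

theorem toSuperComplex_d_mul (x y : ⨁ i, U i) :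
    (toSuperComplex K U).d (totalMul K U x y)
      = totalMul K U ((toSuperComplex K U).d x) y
        + totalMul K U ((toSuperComplex K U).parity x) ((toSuperComplex K U).d y) := by
  induction x using lof_induction_on (K := K) (C := U) with
  | add x x' hx hx' => simp only [map_add, LinearMap.add_apply, hx, hx']; abel
  | lof i x =>
    induction y using lof_induction_on (K := K) (C := U) with
    | add y y' hy hy' => simp only [map_add, hy, hy']; abel
    | lof j y =>
      simp only [totalMul_lof_lof, toSuperComplex_d_lof, toSuperComplex_parity_lof,
        DGAlg.leibniz, map_add, map_smul, LinearMap.smul_apply, lof_gcast]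

end DGAlg

namespace DGAlgHom

open DirectSum

variable {K : Type u} [Field K] {U U' : ℤ → Type u} [∀ i, AddCommGroup (U i)]
  [∀ i, Module K (U i)] [DGAlg K U] [∀ i, AddCommGroup (U' i)] [∀ i, Module K (U' i)]
  [DGAlg K U']

/-- The map of total spaces given by a morphism of dg algebras. -/
noncomputable def total (F : DGAlgHom K U U') : (⨁ i, U i) →ₗ[K] ⨁ i, U' i :=
  lmap F.f

theorem total_lof (F : DGAlgHom K U U') (i : ℤ) (x : U i) :
    F.total (lof K ℤ U i x) = lof K ℤ U' i (F.f i x) :=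
  lmap_lof _ _ _

theorem total_one (F : DGAlgHom K U U') : F.total (DGAlg.totalOne K U) = DGAlg.totalOne K U' := by
  rw [DGAlg.totalOne, total_lof, F.map_one, DGAlg.totalOne]

theorem total_mul (F : DGAlgHom K U U') (x y : ⨁ i, U i) :
    F.total (DGAlg.totalMul K U x y) = DGAlg.totalMul K U' (F.total x) (F.total y) := by
  induction x using lof_induction_on (K := K) (C := U) with
  | add x x' hx hx' => simp only [map_add, LinearMap.add_apply, hx, hx']
  | lof i x =>
    induction y using lof_induction_on (K := K) (C := U) with
    | add y y' hy hy' => simp only [map_add, hy, hy']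
    | lof j y => simp only [DGAlg.totalMul_lof_lof, total_lof, F.map_mul]

/-- The identity morphism of a dg algebra. -/
def id : DGAlgHom K U U where
  f _ := LinearMap.id
  map_d _ _ := rfl
  map_mul _ _ _ _ := rfl
  map_one := rfl

/-- The composition of morphisms of dg algebras. -/
def comp {U'' : ℤ → Type u} [∀ i, AddCommGroup (U'' i)] [∀ i, Module K (U'' i)] [DGAlg K U'']
    (G : DGAlgHom K U' U'') (F : DGAlgHom K U U') : DGAlgHom K U U'' where
  f i := G.f i ∘ₗ F.f i
  map_d i x := by simp only [LinearMap.comp_apply, F.map_d, G.map_d]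
  map_mul i j x y := by simp only [LinearMap.comp_apply, F.map_mul, G.map_mul]
  map_one := by rw [LinearMap.comp_apply, F.map_one, G.map_one]

end DGAlgHom

section DGSubalgebra

/-- A dg subalgebra of a dg algebra, given by its graded pieces. -/
structure DGSubalgebra (K : Type u) [Field K] (U : ℤ → Type u) [∀ i, AddCommGroup (U i)]
    [∀ i, Module K (U i)] [DGAlg K U] where
  carrier : ∀ i, Submodule K (U i)
  one_mem : DGAlg.one K ∈ carrier 0
  mul_mem : ∀ {i j} {x : U i} {y : U j}, x ∈ carrier i → y ∈ carrier j →
    DGAlg.mul (K := K) i j x y ∈ carrier (i + j)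
  d_mem : ∀ {i} {x : U i}, x ∈ carrier i → DGAlg.d (K := K) i x ∈ carrier (i + 1)

namespace DGSubalgebra

variable {K : Type u} [Field K] {U : ℤ → Type u} [∀ i, AddCommGroup (U i)]
  [∀ i, Module K (U i)] [DGAlg K U] (S : DGSubalgebra K U)

theorem coe_gcast {i j : ℤ} (h : i = j) (x : S.carrier i) :
    (gcast (C := fun i => S.carrier i) h x : U j) = gcast h (x : U i) := by
  subst h
  rfl

noncomputable instance : DGAlg K fun i => S.carrier i where
  mul i j := LinearMap.mk₂ K (fun x y => ⟨DGAlg.mul i j x y, S.mul_mem x.2 y.2⟩)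
    (fun x y z => Subtype.ext <| by simp) (fun c x y => Subtype.ext <| by simp)
    (fun x y z => Subtype.ext <| by simp) (fun c x y => Subtype.ext <| by simp)
  one := ⟨DGAlg.one K, S.one_mem⟩
  d i := (DGAlg.d i).restrict fun _ => S.d_mem
  d_sq i x := Subtype.ext <| DGAlg.d_sq i _
  mul_assoc p q r x y z := Subtype.ext <| by
    rw [S.coe_gcast]
    exact DGAlg.mul_assoc p q r _ _ _
  one_mul i x := Subtype.ext <| by
    rw [S.coe_gcast]
    exact DGAlg.one_mul i _
  mul_one i x := Subtype.ext <| by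
    rw [S.coe_gcast]
    exact DGAlg.mul_one i _
  leibniz i j x y := Subtype.ext <| by
    rw [Submodule.coe_add, Submodule.coe_smul, S.coe_gcast, S.coe_gcast]
    exact DGAlg.leibniz i j _ _
  d_one := Subtype.ext DGAlg.d_one

/-- The inclusion of a dg subalgebra. -/
noncomputable def subtype : DGAlgHom K (fun i => S.carrier i) U where
  f i := (S.carrier i).subtype
  map_d _ _ := rfl
  map_mul _ _ _ _ := rfl
  map_one := rfl

end DGSubalgebra

end DGSubalgebra

theorem IsEnvelope.mem_dgSubalgebra {K : Type u} [Field K] {A U : ℤ → Type u}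
    [∀ i, AddCommGroup (A i)] [∀ i, Module K (A i)] [DGLA K A] [∀ i, AddCommGroup (U i)]
    [∀ i, Module K (U i)] [DGAlg K U] {ι : LieToAlgMap K A U} (hU : IsEnvelope K A U ι)
    (S : DGSubalgebra K U) (hS : ∀ i x, ι.f i x ∈ S.carrier i) (i : ℤ) (u : U i) :
    u ∈ S.carrier i := by
  let ιS : LieToAlgMap K A fun i => S.carrier i :=
    { f i := (ι.f i).codRestrict _ (hS i)
      map_d i x := Subtype.ext <| ι.map_d i x
      map_bk i j x y := Subtype.ext <| by
        rw [Submodule.coe_sub, Submodule.coe_smul, S.coe_gcast]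
        exact ι.map_bk i j x y }
  obtain ⟨Φ, hΦ, -⟩ := hU.universal _ _ _ _ ιS
  have hcomp : S.subtype.comp Φ = DGAlgHom.id :=
    (hU.universal U _ _ _ ι).unique (fun i x => congrArg Subtype.val (hΦ i x)) fun _ _ => rfl
  have hu : (Φ.f i u : U i) = u := LinearMap.congr_fun (congrFun (congrArg DGAlgHom.f hcomp) i) u
  exact hu ▸ (Φ.f i u).2

section EndAlgebra

namespace SuperComplex

variable {K V : Type u} [Field K] [AddCommGroup V] [Module K V]

/-- The endomorphism dg algebra of a super complex. As a super complex carries no integral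
grading, every graded piece consists of all endomorphisms. -/
def EndAlgebra (_ : SuperComplex K V) (_ : ℤ) : Type u :=
  Module.End K V

variable (X : SuperComplex K V)

noncomputable instance (i : ℤ) : Ring (X.EndAlgebra i) :=
  inferInstanceAs (Ring (Module.End K V))

noncomputable instance (i : ℤ) : Algebra K (X.EndAlgebra i) :=
  inferInstanceAs (Algebra K (Module.End K V))

theorem gcast_endAlgebra {i j : ℤ} (h : i = j) (f : X.EndAlgebra i) : gcast h f = f := by
  subst h
  rfl

theorem d_mul_d : X.d * X.d = 0 :=
  LinearMap.ext X.d_d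

noncomputable instance : DGAlg K X.EndAlgebra where
  mul _ _ := LinearMap.mul K (Module.End K V)
  one := (1 : Module.End K V)
  d i := LinearMap.mulLeft K X.d - (-1 : K) ^ i • LinearMap.mulRight K X.d
  d_sq i (f : Module.End K V) := by
    change X.d * (X.d * f - (-1 : K) ^ i • (f * X.d))
      - (-1 : K) ^ (i + 1) • ((X.d * f - (-1 : K) ^ i • (f * X.d)) * X.d) = 0
    rw [zpow_add_one₀ (neg_ne_zero.2 one_ne_zero), mul_sub, sub_mul, ← mul_assoc, d_mul_d,
      zero_mul, smul_mul_assoc, mul_assoc f, d_mul_d, mul_zero, mul_smul_comm, ← mul_assoc]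
    module
  mul_assoc p q r f g k := by
    rw [gcast_endAlgebra]
    exact mul_assoc (G := Module.End K V) f g k
  one_mul i f := by
    rw [gcast_endAlgebra]
    exact one_mul (M := Module.End K V) f
  mul_one i f := by
    rw [gcast_endAlgebra]
    exact mul_one (M := Module.End K V) f
  leibniz i j (f : Module.End K V) (g : Module.End K V) := by
    rw [gcast_endAlgebra, gcast_endAlgebra]
    change X.d * (f * g) - (-1 : K) ^ (i + j) • (f * g * X.d)
      = (X.d * f - (-1 : K) ^ i • (f * X.d)) * g
        + (-1 : K) ^ i • (f * (X.d * g - (-1 : K) ^ j • (g * X.d)))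
    rw [zpow_add₀ (neg_ne_zero.2 one_ne_zero), sub_mul, mul_sub, smul_mul_assoc, mul_smul_comm]
    simp only [← mul_assoc]
    module
  d_one := by
    change X.d * 1 - (-1 : K) ^ (0 : ℤ) • (1 * X.d) = 0
    rw [mul_one, one_mul, zpow_zero, one_smul, sub_self]

end SuperComplex

end EndAlgebra

/-! ### Enveloping algebras -/

namespace LieToAlgMap

open DirectSum IteratedTensor DGLA DGAlg

variable {K : Type u} [Field K] {A U : ℤ → Type u} [∀ i, AddCommGroup (A i)]
  [∀ i, Module K (A i)] [DGLA K A] [∀ i, AddCommGroup (U i)] [∀ i, Module K (U i)] [DGAlg K U]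
  (ι : LieToAlgMap K A U)

/-- The map of total spaces given by a map from a dgla to a dg algebra. -/
noncomputable def total : (⨁ i, A i) →ₗ[K] ⨁ i, U i :=
  lmap ι.f

theorem total_lof (i : ℤ) (a : A i) : ι.total (lof K ℤ A i a) = lof K ℤ U i (ι.f i a) :=
  lmap_lof _ _ _

theorem total_isHom :
    SuperComplex.IsHom (DGLA.toSuperComplex K A) (DGAlg.toSuperComplex K U) ι.total where
  map_d x := by
    induction x using lof_induction_on (K := K) (C := A) with
    | lof i a => rw [d_lof, total_lof, total_lof, toSuperComplex_d_lof, ι.map_d]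
    | add x y hx hy => simp only [map_add, hx, hy]
  map_parity x := lmap_totalParity ι.f x

theorem total_mul_total_mul (i j : ℤ) (a : A i) (b : A j) (z : ⨁ i, U i) :
    totalMul K U (ι.total (lof K ℤ A i a)) (totalMul K U (ι.total (lof K ℤ A j b)) z)
      = (-1 : K) ^ (i * j) •
          totalMul K U (ι.total (lof K ℤ A j b)) (totalMul K U (ι.total (lof K ℤ A i a)) z)
        + totalMul K U (ι.total (bracket K A (lof K ℤ A i a) (lof K ℤ A j b))) z := by
  rw [← totalMul_assoc, ← totalMul_assoc, bracket, totalBilin_lof_lof]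
  simp only [total_lof, ι.map_bk, totalMul_lof_lof, map_sub, map_smul, lof_gcast,
    LinearMap.sub_apply, LinearMap.smul_apply, add_sub_cancel]

/-- The linear map `x₁ ⊗ ⋯ ⊗ xₙ ↦ ι x₁ ⋯ ι xₙ` from the tensor algebra of the dgla. -/
noncomputable def ofTensor : TensorModule K (⨁ i, A i) →ₗ[K] ⨁ i, U i :=
  TensorModule.fold (totalMul K U ∘ₗ ι.total) (totalOne K U)

theorem ofTensor_nil : ι.ofTensor TensorModule.nil = totalOne K U :=
  TensorModule.fold_nil _ _

theorem ofTensor_cons (x : ⨁ i, A i) (m : TensorModule K (⨁ i, A i)) :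
    ι.ofTensor (TensorModule.cons x m) = totalMul K U (ι.total x) (ι.ofTensor m) :=
  TensorModule.fold_cons _ _ _ _

theorem respectsCommutators_ofTensor : RespectsCommutators ι.ofTensor := by
  intro n i hi
  suffices h : ι.ofTensor ∘ₗ TensorModule.of (n + 1)
      = ι.ofTensor ∘ₗ TensorModule.of (n + 1) ∘ₗ swapAt K A i (n + 1)
        + ι.ofTensor ∘ₗ TensorModule.of n ∘ₗ bracketAt K A i n from LinearMap.congr_fun h
  induction i generalizing n with
  | zero =>
    obtain ⟨n, rfl⟩ := Nat.exists_eq_succ_of_ne_zero hi.ne'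
    refine hom_ext_cons_lof₂ fun i a j b w => ?_
    simp only [LinearMap.add_apply, LinearMap.comp_apply, swapAt_zero_cons_cons,
      bracketAt_zero_cons_cons, map_smul, ← TensorModule.cons_of, ofTensor_cons]
    exact ι.total_mul_total_mul i j a b _
  | succ i ih =>
    obtain ⟨n, rfl⟩ := Nat.exists_eq_succ_of_ne_zero (Nat.ne_zero_of_lt hi)
    refine hom_ext_cons fun x w => ?_
    have hw := LinearMap.congr_fun (ih n (Nat.lt_of_succ_lt_succ hi)) w
    simp only [LinearMap.add_apply, LinearMap.comp_apply] at hw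
    simp only [LinearMap.add_apply, LinearMap.comp_apply, swapAt_succ, bracketAt_succ,
      mapCons_cons, LinearMap.id_apply, ← TensorModule.cons_of, ofTensor_cons]
    rw [hw, map_add]

theorem ofTensor_d (m : TensorModule K (⨁ i, A i)) :
    ι.ofTensor ((DGLA.toSuperComplex K A).tensorModule.d m)
      = (DGAlg.toSuperComplex K U).d (ι.ofTensor m) := by
  suffices h : ι.ofTensor ∘ₗ (DGLA.toSuperComplex K A).tensorModule.d
      = (DGAlg.toSuperComplex K U).d ∘ₗ ι.ofTensor from LinearMap.congr_fun h m
  refine TensorModule.hom_ext ?_ fun x w hw => ?_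
  · rw [LinearMap.comp_apply, LinearMap.comp_apply, SuperComplex.tensorModule_d_nil, map_zero,
      ofTensor_nil, toSuperComplex_d_totalOne]
  · rw [LinearMap.comp_apply, LinearMap.comp_apply] at hw ⊢
    rw [SuperComplex.tensorModule_d_cons, map_add, ofTensor_cons, ofTensor_cons, ofTensor_cons,
      toSuperComplex_d_mul, hw, ι.total_isHom.map_d, ι.total_isHom.map_parity]

theorem mem_iInf_comap_range {u : ⨁ i, U i} :
    (u ∈ ⨅ m, ι.ofTensor.range.comap ((totalMul K U).flip (ι.ofTensor m)))
      ↔ ∀ m, totalMul K U u (ι.ofTensor m) ∈ ι.ofTensor.range := by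
  simp only [Submodule.mem_iInf, Submodule.mem_comap, LinearMap.flip_apply]

/-- The dg subalgebra of the elements whose left multiplication preserves the range of
`LieToAlgMap.ofTensor`. -/
noncomputable def rangeStabilizer : DGSubalgebra K U where
  carrier i := (⨅ m, ι.ofTensor.range.comap ((totalMul K U).flip (ι.ofTensor m))).comap
    (lof K ℤ U i)
  one_mem := ι.mem_iInf_comap_range.2 fun m => ⟨m, (totalOne_mul _).symm⟩
  mul_mem {i j x y} hx hy := ι.mem_iInf_comap_range.2 fun m => by
    obtain ⟨m', hm'⟩ := ι.mem_iInf_comap_range.1 hy m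
    rw [← totalMul_lof_lof, totalMul_assoc, ← hm']
    exact ι.mem_iInf_comap_range.1 hx m'
  d_mem {i x} hx := ι.mem_iInf_comap_range.2 fun m => by
    obtain ⟨m₁, hm₁⟩ := ι.mem_iInf_comap_range.1 hx m
    obtain ⟨m₂, hm₂⟩ :=
      ι.mem_iInf_comap_range.1 hx ((DGLA.toSuperComplex K A).tensorModule.d m)
    refine ⟨(DGLA.toSuperComplex K A).tensorModule.d m₁ - (-1 : K) ^ i • m₂, ?_⟩
    rw [map_sub, map_smul, ι.ofTensor_d, hm₁, hm₂, ι.ofTensor_d, toSuperComplex_d_mul,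
      toSuperComplex_d_lof, toSuperComplex_parity_lof, map_smul, LinearMap.smul_apply,
      add_sub_cancel_right]

theorem mem_rangeStabilizer {i : ℤ} {u : U i} : u ∈ ι.rangeStabilizer.carrier i
    ↔ ∀ m, totalMul K U (lof K ℤ U i u) (ι.ofTensor m) ∈ ι.ofTensor.range :=
  ι.mem_iInf_comap_range

end LieToAlgMap

namespace DGLA

open DirectSum

theorem RespectsCommutators.apply_cons_cons {K : Type u} [Field K] {A : ℤ → Type u}
    [∀ i, AddCommGroup (A i)] [∀ i, Module K (A i)] [DGLA K A] {W : Type*} [AddCommGroup W]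
    [Module K W] {π : TensorModule K (⨁ i, A i) →ₗ[K] W} (hπ : RespectsCommutators π) {i j : ℤ}
    (a : A i) (b : A j) (m : TensorModule K (⨁ i, A i)) :
    π (TensorModule.cons (lof K ℤ A i a) (TensorModule.cons (lof K ℤ A j b) m))
      = (-1 : K) ^ (i * j) •
          π (TensorModule.cons (lof K ℤ A j b) (TensorModule.cons (lof K ℤ A i a) m))
        + π (TensorModule.cons (bracket K A (lof K ℤ A i a) (lof K ℤ A j b)) m) := by
  induction m using TensorModule.induction_on with
  | add v w hv hw => simp only [map_add, hv, hw, smul_add]; abel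
  | of n w =>
    simp only [TensorModule.cons_of]
    rw [hπ (n + 1) 0 n.succ_pos, swapAt_zero_cons_cons, bracketAt_zero_cons_cons, map_smul,
      map_smul]

theorem pbwProjection_nil {K : Type u} [Field K] {A : ℤ → Type u} [∀ i, AddCommGroup (A i)]
    [∀ i, Module K (A i)] [DGLA K A] : pbwProjection K A TensorModule.nil = TensorModule.nil :=
  pbwProjection_of 0 _

variable (K : Type u) [Field K] [CharZero K] (A : ℤ → Type u) [∀ i, AddCommGroup (A i)]
  [∀ i, Module K (A i)] [DGLA K A]

/-- The action of a dgla on its tensor module by `x ↦ (m ↦ pbwProjection (x ⊗ m))`. On the image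
of the projection, that is on symmetric tensors, it is left multiplication in the enveloping
algebra. -/
noncomputable def pbwAction : LieToAlgMap K A (toSuperComplex K A).tensorModule.EndAlgebra where
  f i := TensorModule.cons.compr₂ (pbwProjection K A) ∘ₗ lof K ℤ A i
  map_d i x := LinearMap.ext fun m => by
    change pbwProjection K A (TensorModule.cons (lof K ℤ A (i + 1) (DGLA.d (K := K) i x)) m)
      = (toSuperComplex K A).tensorModule.d
          (pbwProjection K A (TensorModule.cons (lof K ℤ A i x) m))
        - (-1 : K) ^ i • pbwProjection K A
          (TensorModule.cons (lof K ℤ A i x) ((toSuperComplex K A).tensorModule.d m))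
    rw [tensorModule_d_pbwProjection, SuperComplex.tensorModule_d_cons, d_lof, parity_lof]
    simp only [map_add, map_smul, LinearMap.smul_apply, add_sub_cancel_right]
  map_bk i j x y := LinearMap.ext fun m => by
    rw [SuperComplex.gcast_endAlgebra]
    change pbwProjection K A (TensorModule.cons (lof K ℤ A (i + j) (DGLA.bk (K := K) i j x y)) m)
      = pbwProjection K A (TensorModule.cons (lof K ℤ A i x)
          (pbwProjection K A (TensorModule.cons (lof K ℤ A j y) m)))
        - (-1 : K) ^ (i * j) • pbwProjection K A (TensorModule.cons (lof K ℤ A j y)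
          (pbwProjection K A (TensorModule.cons (lof K ℤ A i x) m)))
    rw [pbwProjection_cons_pbwProjection, pbwProjection_cons_pbwProjection,
      respectsCommutators_pbwProjection.apply_cons_cons, bracket, totalBilin_lof_lof,
      add_sub_cancel_left]

end DGLA

namespace IsEnvelope

open DirectSum DGLA DGAlg

variable {K : Type u} [Field K] {A U : ℤ → Type u} [∀ i, AddCommGroup (A i)]
  [∀ i, Module K (A i)] [DGLA K A] [∀ i, AddCommGroup (U i)] [∀ i, Module K (U i)] [DGAlg K U]
  {ι : LieToAlgMap K A U}

theorem ofTensor_surjective (hU : IsEnvelope K A U ι) : Function.Surjective ι.ofTensor := by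
  have hι (i : ℤ) (a : A i) : ι.f i a ∈ ι.rangeStabilizer.carrier i := by
    refine ι.mem_rangeStabilizer.2 fun m => ⟨TensorModule.cons (lof K ℤ A i a) m, ?_⟩
    rw [ι.ofTensor_cons, ι.total_lof]
  rw [← LinearMap.range_eq_top, eq_top_iff]
  refine fun u _ => mem_of_forall_lof_mem fun i => ?_
  have hu := ι.mem_rangeStabilizer.1 (hU.mem_dgSubalgebra ι.rangeStabilizer hι i (u i))
    TensorModule.nil
  rwa [ι.ofTensor_nil, mul_totalOne] at hu

theorem exists_comp_ofTensor_eq_pbwProjection [CharZero K] (hU : IsEnvelope K A U ι) :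
    ∃ s : (⨁ i, U i) →ₗ[K] TensorModule K (⨁ i, A i),
      ∀ m, s (ι.ofTensor m) = pbwProjection K A m := by
  obtain ⟨Φ, hΦ, -⟩ := hU.universal _ _ _ _ (pbwAction K A)
  let s : (⨁ i, U i) →ₗ[K] TensorModule K (⨁ i, A i) :=
    toModule K ℤ _ fun i => (LinearMap.applyₗ TensorModule.nil :
      Module.End K (TensorModule K (⨁ i, A i)) →ₗ[K] _) ∘ₗ Φ.f i
  have hs_lof (i : ℤ) (u : U i) : s (lof K ℤ U i u) = (Φ.f i u).1 TensorModule.nil :=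
    toModule_lof _ _ _
  have hs_one : s (totalOne K U) = TensorModule.nil := by
    rw [totalOne, hs_lof, Φ.map_one]
    rfl
  have hs_mul (x : ⨁ i, A i) (u : ⨁ i, U i) : s (totalMul K U (ι.total x) u)
      = pbwProjection K A (TensorModule.cons x (s u)) := by
    induction x using lof_induction_on (K := K) (C := A) with
    | add x y hx hy => simp only [map_add, LinearMap.add_apply, hx, hy]
    | lof i a =>
      induction u using lof_induction_on (K := K) (C := U) with
      | add u v hu hv => simp only [map_add, hu, hv]
      | lof j u =>
        rw [ι.total_lof, totalMul_lof_lof, hs_lof, hs_lof, Φ.map_mul, hΦ]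
        rfl
  suffices h : s ∘ₗ ι.ofTensor = pbwProjection K A from ⟨s, LinearMap.congr_fun h⟩
  refine TensorModule.hom_ext ?_ fun x m hm => ?_
  · rw [LinearMap.comp_apply, ι.ofTensor_nil, hs_one, pbwProjection_nil]
  · rw [LinearMap.comp_apply] at hm ⊢
    rw [ι.ofTensor_cons, hs_mul, hm, pbwProjection_cons_pbwProjection]

theorem exists_section [CharZero K] (hU : IsEnvelope K A U ι) :
    ∃ s : (⨁ i, U i) →ₗ[K] TensorModule K (⨁ i, A i), (∀ u, ι.ofTensor (s u) = u) ∧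
      (∀ m, s (ι.ofTensor m) = pbwProjection K A m) ∧
      ∀ u, s ((DGAlg.toSuperComplex K U).d u)
        = (DGLA.toSuperComplex K A).tensorModule.d (s u) := by
  obtain ⟨s, hs⟩ := hU.exists_comp_ofTensor_eq_pbwProjection
  refine ⟨s, hU.ofTensor_surjective.forall.2 fun m => ?_, hs,
    hU.ofTensor_surjective.forall.2 fun m => ?_⟩
  · rw [hs]
    exact LinearMap.congr_fun ι.respectsCommutators_ofTensor.comp_pbwProjection m
  · rw [← ι.ofTensor_d, hs, hs, tensorModule_d_pbwProjection]

end IsEnvelope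

/-! ### Quasi-isomorphisms of enveloping algebras -/

namespace TensorModule

open DirectSum IteratedTensor

variable {K V : Type u} [Field K] [AddCommGroup V] [Module K V]

/-- The augmentation of the tensor algebra, killing all tensors of positive length. -/
noncomputable def augmentation : TensorModule K V →ₗ[K] K :=
  fold 0 1

theorem augmentation_nil : augmentation (nil : TensorModule K V) = 1 :=
  fold_nil _ _

theorem augmentation_cons (x : V) (m : TensorModule K V) : augmentation (cons x m) = 0 :=
  fold_cons _ _ _ _

/-- The action of an endomorphism on the first factor of the tensors of positive length; the empty
tensor is sent to `0`. -/
noncomputable def mapHead (k : Module.End K V) : Module.End K (TensorModule K V) :=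
  lmap fun
    | 0 => 0
    | _ + 1 => mapCons k LinearMap.id

theorem mapHead_nil (k : Module.End K V) : mapHead k nil = 0 :=
  (lmap_lof _ _ _).trans (map_zero _)

theorem mapHead_cons (k : Module.End K V) (x : V) (m : TensorModule K V) :
    mapHead k (cons x m) = cons (k x) m := by
  induction m using TensorModule.induction_on with
  | add v w hv hw => simp only [map_add, hv, hw]
  | of n w =>
    rw [cons_of, mapHead, lmap_lof, mapCons_cons, cons_of, LinearMap.id_apply]

end TensorModule

namespace SuperComplex

open TensorModule

variable {K V : Type u} [Field K] [AddCommGroup V] [Module K V] {X : SuperComplex K V}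

theorem augmentation_tensorModule_d (m : TensorModule K V) :
    augmentation (X.tensorModule.d m) = 0 := by
  suffices h : augmentation ∘ₗ X.tensorModule.d = 0 from LinearMap.congr_fun h m
  refine TensorModule.hom_ext ?_ fun x m _ => ?_
  · rw [LinearMap.comp_apply, tensorModule_d_nil, map_zero, LinearMap.zero_apply]
  · rw [LinearMap.comp_apply, tensorModule_d_cons, map_add, augmentation_cons, augmentation_cons,
      add_zero, LinearMap.zero_apply]

theorem IsContraction.tensorModule_d_add {k : Module.End K V} (hk : IsContraction X k)
    (m : TensorModule K V) : X.tensorModule.d (mapHead k m) + mapHead k (X.tensorModule.d m)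
      = m - augmentation m • nil := by
  suffices h : X.tensorModule.d ∘ₗ mapHead k + mapHead k ∘ₗ X.tensorModule.d
      = LinearMap.id - augmentation.smulRight nil from LinearMap.congr_fun h m
  refine TensorModule.hom_ext ?_ fun x m _ => ?_
  · simp only [LinearMap.add_apply, LinearMap.comp_apply, mapHead_nil, tensorModule_d_nil,
      map_zero, add_zero, LinearMap.sub_apply, LinearMap.id_apply, LinearMap.smulRight_apply,
      augmentation_nil, one_smul, sub_self]
  · simp only [LinearMap.add_apply, LinearMap.comp_apply, LinearMap.sub_apply,
      LinearMap.id_apply, LinearMap.smulRight_apply, augmentation_cons, zero_smul, sub_zero,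
      tensorModule_d_cons, mapHead_cons, map_add, hk.odd x, map_neg, LinearMap.neg_apply]
    rw [add_add_add_comm, add_neg_cancel, add_zero, ← LinearMap.add_apply, ← map_add, hk.d_add]

end SuperComplex

section Envelope

open DirectSum DGLA DGAlg SuperComplex

theorem LieToAlgMap.total_ofTensor {K : Type u} [Field K] {A A' U U' : ℤ → Type u}
    [∀ i, AddCommGroup (A i)] [∀ i, Module K (A i)] [DGLA K A] [∀ i, AddCommGroup (A' i)]
    [∀ i, Module K (A' i)] [DGLA K A'] [∀ i, AddCommGroup (U i)] [∀ i, Module K (U i)]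
    [DGAlg K U] [∀ i, AddCommGroup (U' i)] [∀ i, Module K (U' i)] [DGAlg K U']
    {ι : LieToAlgMap K A U} {ι' : LieToAlgMap K A' U'} {h : DGLAHom K A A'}
    {F : DGAlgHom K U U'} (hF : ∀ i x, F.f i (ι.f i x) = ι'.f i (h.f i x))
    (m : TensorModule K (⨁ i, A i)) :
    F.total (ι.ofTensor m) = ι'.ofTensor (TensorModule.map h.total m) := by
  have htotal (x : ⨁ i, A i) : F.total (ι.total x) = ι'.total (h.total x) := by
    induction x using lof_induction_on (K := K) (C := A) with
    | lof i a => rw [ι.total_lof, F.total_lof, hF, h.total_lof, ι'.total_lof]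
    | add x y hx hy => simp only [map_add, hx, hy]
  suffices hcomp : F.total ∘ₗ ι.ofTensor = ι'.ofTensor ∘ₗ TensorModule.map h.total from
    LinearMap.congr_fun hcomp m
  refine TensorModule.hom_ext ?_ fun x m hm => ?_
  · rw [LinearMap.comp_apply, LinearMap.comp_apply, TensorModule.map_nil, ι.ofTensor_nil,
      ι'.ofTensor_nil, F.total_one]
  · rw [LinearMap.comp_apply, LinearMap.comp_apply] at hm ⊢
    rw [TensorModule.map_cons, ι.ofTensor_cons, ι'.ofTensor_cons, F.total_mul, htotal, hm]

namespace IsEnvelope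

variable {K : Type u} [Field K] [CharZero K] {A U : ℤ → Type u} [∀ i, AddCommGroup (A i)]
  [∀ i, Module K (A i)] [DGLA K A] [∀ i, AddCommGroup (U i)] [∀ i, Module K (U i)] [DGAlg K U]
  {ι : LieToAlgMap K A U}

theorem isQuasiIso_total {A' U' : ℤ → Type u} [∀ i, AddCommGroup (A' i)] [∀ i, Module K (A' i)]
    [DGLA K A'] [∀ i, AddCommGroup (U' i)] [∀ i, Module K (U' i)] [DGAlg K U']
    {ι' : LieToAlgMap K A' U'} {h : DGLAHom K A A'} {F : DGAlgHom K U U'}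
    (hU : IsEnvelope K A U ι) (hU' : IsEnvelope K A' U' ι')
    (hF : ∀ i x, F.f i (ι.f i x) = ι'.f i (h.f i x))
    (hh : IsQuasiIso (DGLA.toSuperComplex K A) (DGLA.toSuperComplex K A') h.total) :
    IsQuasiIso (DGAlg.toSuperComplex K U) (DGAlg.toSuperComplex K U') F.total := by
  have htensor := (hh.isHomotopyEquiv h.total_isHom).tensorModule.isQuasiIso
  obtain ⟨s, hπs, hsπ, hsd⟩ := hU.exists_section
  obtain ⟨s', hπs', hsπ', hsd'⟩ := hU'.exists_section
  refine htensor.of_retract hsd ι.ofTensor_d hsd' ι'.ofTensor_d hπs hπs' (fun u => ?_)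
    (LieToAlgMap.total_ofTensor hF)
  calc TensorModule.map h.total (s u)
      = TensorModule.map h.total (pbwProjection K A (s u)) := by rw [← hsπ, hπs]
    _ = pbwProjection K A' (TensorModule.map h.total (s u)) := map_pbwProjection h _
    _ = s' (F.total u) := by rw [← hsπ', ← LieToAlgMap.total_ofTensor hF, hπs]

theorem exists_eq_smul_totalOne_add_d (hU : IsEnvelope K A U ι)
    (hA : (DGLA.toSuperComplex K A).IsAcyclic) {u : ⨁ i, U i}
    (hu : (DGAlg.toSuperComplex K U).d u = 0) :
    ∃ (c : K) (v : ⨁ i, U i), u = c • totalOne K U + (DGAlg.toSuperComplex K U).d v := by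
  obtain ⟨k, hk⟩ := hA.exists_isContraction
  obtain ⟨s, hπs, -, hsd⟩ := hU.exists_section
  refine ⟨TensorModule.augmentation (s u), ι.ofTensor (TensorModule.mapHead k (s u)), ?_⟩
  have hhomotopy := congrArg ι.ofTensor (hk.tensorModule_d_add (s u))
  rw [← hsd, hu, map_zero, map_zero, add_zero, map_sub, map_smul, hπs, ι.ofTensor_nil,
    ι.ofTensor_d] at hhomotopy
  rw [hhomotopy, add_sub_cancel]

theorem eq_zero_of_d_eq_smul_totalOne (hU : IsEnvelope K A U ι) {c : K} {v : ⨁ i, U i}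
    (hv : (DGAlg.toSuperComplex K U).d v = c • totalOne K U) : c = 0 := by
  obtain ⟨s, -, hsπ, hsd⟩ := hU.exists_section
  calc c = TensorModule.augmentation (s (c • totalOne K U)) := by
        rw [map_smul, map_smul, ← ι.ofTensor_nil, hsπ, pbwProjection_nil,
          TensorModule.augmentation_nil, smul_eq_mul, _root_.mul_one]
    _ = 0 := by rw [← hv, hsd, augmentation_tensorModule_d]

theorem exists_eq_smul_totalOne_apply_add_d (hU : IsEnvelope K A U ι)
    (hA : (DGLA.toSuperComplex K A).IsAcyclic) (i : ℤ) {x : U i}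
    (hx : DGAlg.d (K := K) i x = 0) :
    ∃ (c : K) (y : U (i - 1)), x = c • totalOne K U i
      + gcast (show i - 1 + 1 = i by omega) (DGAlg.d (K := K) (i - 1) y) := by
  obtain ⟨c, v, hv⟩ := hU.exists_eq_smul_totalOne_add_d hA (u := lof K ℤ U i x) (by
    rw [toSuperComplex_d_lof, hx, map_zero])
  refine ⟨c, v (i - 1), ?_⟩
  have hi := congrArg (· i) hv
  rw [← totalD_apply]
  exact (lof_apply K i x).symm.trans hi

end IsEnvelope

end Envelope

/-- A quasi-isomorphism `f : 𝔤 → 𝔥` of dglas over a field of characteristic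
zero induces a quasi-isomorphism `U(𝔤) → U(𝔥)` of universal enveloping dg algebras.
In particular, since `Cn(𝔤)` is acyclic, for the universal envelope `(E, ιE)` of any acyclic
dgla (such as `Cn(𝔤)`), the unit map `k = U(0) → U(Cn(𝔤))` is a quasi-isomorphism, i.e. the
cohomology of `E` is `k`, concentrated in degree `0`. -/
theorem stmt8 {K : Type u} [Field K] [CharZero K]
    (A A' : ℤ → Type u)
    [∀ i, AddCommGroup (A i)] [∀ i, Module K (A i)] [DGLA K A]
    [∀ i, AddCommGroup (A' i)] [∀ i, Module K (A' i)] [DGLA K A']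
    (h : DGLAHom K A A')
    (hqis : IsQIsoMap K (DGLA.d (K := K) (A := A)) (DGLA.d (K := K) (A := A')) h.f)
    (U : ℤ → Type u) [∀ i, AddCommGroup (U i)] [∀ i, Module K (U i)] [DGAlg K U]
    (ι : LieToAlgMap K A U) (hU : IsEnvelope K A U ι)
    (U' : ℤ → Type u) [∀ i, AddCommGroup (U' i)] [∀ i, Module K (U' i)] [DGAlg K U']
    (ι' : LieToAlgMap K A' U') (hU' : IsEnvelope K A' U' ι')
    (F : DGAlgHom K U U')
    (hF : ∀ i (x : A i), F.f i (ι.f i x) = ι'.f i (h.f i x))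
    -- data for the "in particular" statement: the envelope of an acyclic dgla such as `Cn(𝔤)`
    (C : ℤ → Type u) [∀ i, AddCommGroup (C i)] [∀ i, Module K (C i)] [DGLA K C]
    (hacyclic : ∀ (i : ℤ) (x : C i), DGLA.d (K := K) (A := C) i x = 0 →
      ∃ y : C (i - 1), gcast (C := C) (show i - 1 + 1 = i by omega)
        (DGLA.d (K := K) (A := C) (i - 1) y) = x)
    (E : ℤ → Type u) [∀ i, AddCommGroup (E i)] [∀ i, Module K (E i)] [DGAlg K E]
    (ιE : LieToAlgMap K C E) (hE : IsEnvelope K C E ιE) :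
    IsQIsoMap K (DGAlg.d (K := K) (B := U)) (DGAlg.d (K := K) (B := U')) F.f ∧
    ((∀ (i : ℤ) (x : E i), i ≠ 0 → DGAlg.d (K := K) (B := E) i x = 0 →
        ∃ y : E (i - 1), gcast (C := E) (show i - 1 + 1 = i by omega)
          (DGAlg.d (K := K) (B := E) (i - 1) y) = x) ∧
      (∀ x : E 0, DGAlg.d (K := K) (B := E) 0 x = 0 →
        ∃ (c : K) (y : E (-1)),
          x = c • DGAlg.one (K := K) (B := E)
            + gcast (C := E) (show (-1 : ℤ) + 1 = 0 by omega)
                (DGAlg.d (K := K) (B := E) (-1) y)) ∧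
      (∀ c : K, (∃ y : E (-1),
          gcast (C := E) (show (-1 : ℤ) + 1 = 0 by omega)
            (DGAlg.d (K := K) (B := E) (-1) y) = c • DGAlg.one (K := K) (B := E)) → c = 0)) := by
  have hC := totalComplex_isAcyclic (hdC := DGLA.d_sq) hacyclic
  refine ⟨.of_isQuasiIso_lmap (hU.isQuasiIso_total hU' hF hqis.isQuasiIso_lmap),
    fun i x hi hx => ?_, fun x hx => ?_, fun c ⟨y, hy⟩ => ?_⟩
  · obtain ⟨c, y, hxy⟩ := hE.exists_eq_smul_totalOne_apply_add_d hC i hx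
    refine ⟨y, ?_⟩
    rw [hxy, DGAlg.totalOne_apply_of_ne hi, smul_zero, zero_add]
  · obtain ⟨c, y, hxy⟩ := hE.exists_eq_smul_totalOne_apply_add_d hC 0 hx
    exact ⟨c, y, by rw [hxy, DGAlg.totalOne_apply_zero]; rfl⟩
  · refine hE.eq_zero_of_d_eq_smul_totalOne (v := DirectSum.lof K ℤ E (-1) y) ?_
    rw [DGAlg.toSuperComplex_d_lof, ← lof_gcast (show (-1 : ℤ) + 1 = 0 by omega), hy, map_smul]
    rfl
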